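/- arXiv:1707.06754 — 4 statements merged into one kernel-verified Lean document; each statement's English description precedes it below -/
import Mathlib

section
/- Let n ≥ 1, let Ω ⊆ ℝ^n be a nonempty bounded open set, and let V : Ω → ℝ be a C² function with V(x) > 0 and ΔV(x) < 0 for all x ∈ Ω, and such that Δ(V^σ)(x) ≤ 0 for all x ∈ Ω for some σ > 1. Then for every 1 ≤ p < ∞ and every smooth compactly supported complex-valued function u on Ω, one has (∫_Ω |ΔV| |u|^p dx)^{1/p} ≤ (p²/((p-1)σ + 1)) · (∫_Ω (V^p / |ΔV|^{p-1}) |Δu|^p dx)^{1/p}. -/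
/-!
Write `φ = |u|² + ε` and `G = φ^{p/2} - ε^{p/2}`, a `C²` function supported in `K = supp u`.

* By the chain rule and `|∇φ|² ≤ 4 φ |∇u|²`,
  `ΔG ≥ -p φ^{(p-1)/2} |Δu| + (p(p-1)/4) φ^{p/2-2} |∇φ|²`.
* The hypothesis `Δ(V^σ) ≤ 0` says `(σ-1) |∇V|² ≤ V |ΔV|`, so Young's inequality bounds
  `∇V · ∇G` by `(1/2) |ΔV| φ^{p/2} + p²/(8(σ-1)) V φ^{p/2-2} |∇φ|²`.

With `a = (p-1)(σ-1)/p`, the combination `V ΔG - 2a ∇V · ∇G` is free of the gradient term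
(`pointwise_rellich`), and Green's identities give it the integral `(1 + 2a) ∫ G ΔV`. Hence
`(1 + 2a) ∫ |ΔV| G ≤ p ∫ V φ^{(p-1)/2} |Δu| + a ∫_K |ΔV| φ^{p/2}` (`regularised_rellich`), and
letting `ε → 0` yields `((p-1)σ+1)/p · ∫ |ΔV| |u|^p ≤ p ∫ V |u|^{p-1} |Δu|`
(`integral_rellich`). Hölder's inequality (`weighted_holder`) bounds the right-hand side by
`p (∫ |ΔV| |u|^p)^{1-1/p} (∫ V^p |ΔV|^{1-p} |Δu|^p)^{1/p}`, and dividing concludes.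

Only the values of `V` near `K` matter, so a cutoff makes `V` globally `C²`
(`exists_global_extension`).
-/

open MeasureTheory Real

/-- The Euclidean Laplacian of a function on `ℝ^n`. -/
noncomputable def lap {n : ℕ} {E : Type*} [NormedAddCommGroup E] [NormedSpace ℝ E]
    (f : EuclideanSpace ℝ (Fin n) → E) (x : EuclideanSpace ℝ (Fin n)) : E :=
  ∑ i : Fin n,
    fderiv ℝ (fun y => fderiv ℝ f y (EuclideanSpace.single i 1)) x (EuclideanSpace.single i 1)

/-- The Euclidean norm of the gradient of a function on `ℝ^n`. -/
noncomputable def gradNorm {n : ℕ} {E : Type*} [NormedAddCommGroup E] [NormedSpace ℝ E]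
    (f : EuclideanSpace ℝ (Fin n) → E) (x : EuclideanSpace ℝ (Fin n)) : ℝ :=
  Real.sqrt (∑ i : Fin n, ‖fderiv ℝ f x (EuclideanSpace.single i 1)‖ ^ 2)

open Filter Topology Set
open scoped ContDiff Manifold

/-! ### Calculus of the Laplacian and Green's identities -/

section Calculus

variable {n : ℕ}

lemma lap_congr_nhds {E : Type*} [NormedAddCommGroup E] [NormedSpace ℝ E]
    {f g : EuclideanSpace ℝ (Fin n) → E} {x : EuclideanSpace ℝ (Fin n)} (h : f =ᶠ[𝓝 x] g) :
    lap f x = lap g x := by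
  unfold lap
  refine Finset.sum_congr rfl fun i _ => ?_
  have h2 : (fun y => fderiv ℝ f y (EuclideanSpace.single i 1)) =ᶠ[𝓝 x]
      fun y => fderiv ℝ g y (EuclideanSpace.single i 1) := by
    filter_upwards [h.fderiv (𝕜 := ℝ)] with y hy
    rw [hy]
  rw [h2.fderiv_eq]

lemma contDiff_partial {E : Type*} [NormedAddCommGroup E] [NormedSpace ℝ E]
    {f : EuclideanSpace ℝ (Fin n) → E} (hf : ContDiff ℝ 2 f) (v : EuclideanSpace ℝ (Fin n)) :
    ContDiff ℝ 1 fun y => fderiv ℝ f y v :=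
  (hf.fderiv_right (m := 1) (by norm_num)).clm_apply contDiff_const

lemma contDiffAt_partial {E : Type*} [NormedAddCommGroup E] [NormedSpace ℝ E]
    {f : EuclideanSpace ℝ (Fin n) → E} {x : EuclideanSpace ℝ (Fin n)} (hf : ContDiffAt ℝ 2 f x)
    (v : EuclideanSpace ℝ (Fin n)) :
    ContDiffAt ℝ 1 (fun y => fderiv ℝ f y v) x :=
  (hf.fderiv_right (m := 1) (by norm_num)).clm_apply contDiffAt_const

lemma continuous_lap {E : Type*} [NormedAddCommGroup E] [NormedSpace ℝ E]
    {f : EuclideanSpace ℝ (Fin n) → E} (hf : ContDiff ℝ 2 f) : Continuous (lap f) := by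
  unfold lap
  refine continuous_finsetSum _ fun i _ => ?_
  exact ((contDiff_partial hf _).continuous_fderiv (by norm_num)).clm_apply continuous_const

lemma lap_eq_zero_of_notMem_tsupport {E : Type*} [NormedAddCommGroup E] [NormedSpace ℝ E]
    {f : EuclideanSpace ℝ (Fin n) → E} {x : EuclideanSpace ℝ (Fin n)} (hx : x ∉ tsupport f) :
    lap f x = 0 := by
  rw [lap_congr_nhds (notMem_tsupport_iff_eventuallyEq.1 hx)]
  simp [lap, Pi.zero_def]

lemma fderiv_rpow_apply {f : EuclideanSpace ℝ (Fin n) → ℝ} {x : EuclideanSpace ℝ (Fin n)}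
    (hf : DifferentiableAt ℝ f x) (hpos : 0 < f x) (s : ℝ) (v : EuclideanSpace ℝ (Fin n)) :
    fderiv ℝ (fun y => f y ^ s) x v = s * f x ^ (s - 1) * fderiv ℝ f x v := by
  rw [(hf.hasFDerivAt.rpow_const (p := s) (Or.inl hpos.ne')).fderiv]
  simp

/-- Chain rule `Δ(f^s) = s f^{s-1} Δf + s (s-1) f^{s-2} |∇f|²` at a point where `f > 0`. -/
lemma lap_rpow {f : EuclideanSpace ℝ (Fin n) → ℝ} {x : EuclideanSpace ℝ (Fin n)}
    (hf : ContDiffAt ℝ 2 f x) (hpos : 0 < f x) (s : ℝ) :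
    lap (fun y => f y ^ s) x = s * f x ^ (s - 1) * lap f x +
      s * (s - 1) * f x ^ (s - 2) * ∑ i, fderiv ℝ f x (EuclideanSpace.single i 1) ^ 2 := by
  unfold lap
  rw [Finset.mul_sum, Finset.mul_sum, ← Finset.sum_add_distrib]
  refine Finset.sum_congr rfl fun i _ => ?_
  set v : EuclideanSpace ℝ (Fin n) := EuclideanSpace.single i 1
  have h1 : (fun y => fderiv ℝ (fun y => f y ^ s) y v) =ᶠ[𝓝 x]
      fun y => s * f y ^ (s - 1) * fderiv ℝ f y v := by
    have hd : ∀ᶠ y in 𝓝 x, ContDiffAt ℝ 2 f y := hf.eventually (by simp)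
    have hp : ∀ᶠ y in 𝓝 x, 0 < f y := hf.continuousAt.eventually (lt_mem_nhds hpos)
    filter_upwards [hd, hp] with y hy hy'
    exact fderiv_rpow_apply (hy.differentiableAt (by norm_num)) hy' s v
  rw [h1.fderiv_eq]
  have hfd := hf.differentiableAt (by norm_num)
  have h2 : HasFDerivAt (fun y => f y ^ (s - 1)) _ x :=
    hfd.hasFDerivAt.rpow_const (p := s - 1) (Or.inl hpos.ne')
  have h3 := ((contDiffAt_partial hf v).differentiableAt (by norm_num)).hasFDerivAt
  have h4 := (h2.const_mul s).mul h3
  rw [show (fun y => s * f y ^ (s - 1) * fderiv ℝ f y v) =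
    ((fun y => s * f y ^ (s - 1)) * fun y => fderiv ℝ f y v) from rfl, h4.fderiv]
  simp only [add_apply, smul_apply, smul_eq_mul]
  rw [show s - 1 - 1 = s - 2 by ring]
  ring

lemma fderiv_norm_sq_add_const {u : EuclideanSpace ℝ (Fin n) → ℂ}
    {x : EuclideanSpace ℝ (Fin n)} (hu : DifferentiableAt ℝ u x) (ε : ℝ)
    (v : EuclideanSpace ℝ (Fin n)) :
    fderiv ℝ (fun y => ‖u y‖ ^ 2 + ε) x v = 2 * inner ℝ (u x) (fderiv ℝ u x v) := by
  rw [fderiv_add_const, show (fun y => ‖u y‖ ^ 2) = (‖u ·‖ ^ 2) from rfl,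
    hu.hasFDerivAt.norm_sq.fderiv]
  simp [two_smul, two_mul]

/-- `Δ|u|² = 2 Re(ū Δu) + 2 |∇u|²`, with the real inner product of `ℂ` in place of `Re(ū ·)`. -/
lemma lap_norm_sq_add_const {u : EuclideanSpace ℝ (Fin n) → ℂ} (hu : ContDiff ℝ 2 u)
    (x : EuclideanSpace ℝ (Fin n)) (ε : ℝ) :
    lap (fun y => ‖u y‖ ^ 2 + ε) x = 2 * inner ℝ (u x) (lap u x) +
      2 * ∑ i, ‖fderiv ℝ u x (EuclideanSpace.single i 1)‖ ^ 2 := by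
  have hd := hu.differentiable (by norm_num)
  unfold lap
  rw [inner_sum, Finset.mul_sum, Finset.mul_sum, ← Finset.sum_add_distrib]
  refine Finset.sum_congr rfl fun i _ => ?_
  simp only [fun y => fderiv_norm_sq_add_const (hd y) ε]
  set v : EuclideanSpace ℝ (Fin n) := EuclideanSpace.single i 1
  have h3 := ((contDiff_partial hu v).differentiable (by norm_num) x).hasFDerivAt
  have h4 := ((hd x).hasFDerivAt.inner ℝ h3).const_mul 2
  rw [h4.fderiv]
  simp [fderivInnerCLM_apply]
  ring

lemma integrable_mul_of_hasCompactSupport {f g : EuclideanSpace ℝ (Fin n) → ℝ}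
    (hf : Continuous f) (hg : Continuous g) (hc : HasCompactSupport g) :
    Integrable fun x => f x * g x :=
  (hf.mul hg).integrable_of_hasCompactSupport hc.mul_left

/-- Green's first identity against a compactly supported function. -/
lemma integral_mul_lap {f g : EuclideanSpace ℝ (Fin n) → ℝ} (hf : ContDiff ℝ 1 f)
    (hg : ContDiff ℝ 2 g) (hc : HasCompactSupport g) :
    ∫ x, f x * lap g x = - ∫ x, ∑ i, fderiv ℝ f x (EuclideanSpace.single i 1) *
      fderiv ℝ g x (EuclideanSpace.single i 1) := by
  have hf' : ∀ v, Continuous fun x => fderiv ℝ f x v := fun v =>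
    (hf.continuous_fderiv (by norm_num)).clm_apply continuous_const
  have hg' := contDiff_partial hg
  have hg'' : ∀ v, Continuous fun x => fderiv ℝ (fun y => fderiv ℝ g y v) x v := fun v =>
    ((hg' v).continuous_fderiv (by norm_num)).clm_apply continuous_const
  have hc' : ∀ v, HasCompactSupport fun x => fderiv ℝ g x v := fun v => hc.fderiv_apply ℝ v
  have hc'' : ∀ v, HasCompactSupport fun x => fderiv ℝ (fun y => fderiv ℝ g y v) x v :=
    fun v => (hc' v).fderiv_apply ℝ v
  unfold lap
  simp only [Finset.mul_sum]
  rw [integral_finsetSum _ fun i _ =>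
      integrable_mul_of_hasCompactSupport hf.continuous (hg'' _) (hc'' _),
    integral_finsetSum _ fun i _ =>
      integrable_mul_of_hasCompactSupport (hf' _) (hg' _).continuous (hc' _),
    ← Finset.sum_neg_distrib]
  refine Finset.sum_congr rfl fun i _ => ?_
  exact integral_mul_fderiv_eq_neg_fderiv_mul_of_integrable
    (integrable_mul_of_hasCompactSupport (hf' _) (hg' _).continuous (hc' _))
    (integrable_mul_of_hasCompactSupport hf.continuous (hg'' _) (hc'' _))
    (integrable_mul_of_hasCompactSupport hf.continuous (hg' _).continuous (hc' _))
    (fun x _ => hf.differentiable (by norm_num) x)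
    (fun x _ => (hg' _).differentiable (by norm_num) x)

/-- Green's first identity with the Laplacian on the function that need not have compact
support. -/
lemma integral_lap_mul {f g : EuclideanSpace ℝ (Fin n) → ℝ} (hf : ContDiff ℝ 2 f)
    (hg : ContDiff ℝ 1 g) (hc : HasCompactSupport g) :
    ∫ x, lap f x * g x = - ∫ x, ∑ i, fderiv ℝ f x (EuclideanSpace.single i 1) *
      fderiv ℝ g x (EuclideanSpace.single i 1) := by
  have hg' : ∀ v, Continuous fun x => fderiv ℝ g x v := fun v =>
    (hg.continuous_fderiv (by norm_num)).clm_apply continuous_const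
  have hf' := contDiff_partial hf
  have hf'' : ∀ v, Continuous fun x => fderiv ℝ (fun y => fderiv ℝ f y v) x v := fun v =>
    ((hf' v).continuous_fderiv (by norm_num)).clm_apply continuous_const
  have hc' : ∀ v, HasCompactSupport fun x => fderiv ℝ g x v := fun v => hc.fderiv_apply ℝ v
  unfold lap
  simp only [Finset.sum_mul]
  rw [integral_finsetSum _ fun i _ =>
      integrable_mul_of_hasCompactSupport (hf'' _) hg.continuous hc,
    integral_finsetSum _ fun i _ =>
      integrable_mul_of_hasCompactSupport (hf' _).continuous (hg' _) (hc' _),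
    ← Finset.sum_neg_distrib]
  refine Finset.sum_congr rfl fun i _ => ?_
  rw [eq_neg_iff_add_eq_zero, add_comm, ← eq_neg_iff_add_eq_zero]
  exact integral_mul_fderiv_eq_neg_fderiv_mul_of_integrable
    (integrable_mul_of_hasCompactSupport (hf'' _) hg.continuous hc)
    (integrable_mul_of_hasCompactSupport (hf' _).continuous (hg' _) (hc' _))
    (integrable_mul_of_hasCompactSupport (hf' _).continuous hg.continuous hc)
    (fun x _ => (hf' _).differentiable (by norm_num) x)
    (fun x _ => hg.differentiable (by norm_num) x)

end Calculus

/-! ### The pointwise inequality -/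

section Pointwise

/-- The pointwise inequality behind the estimate. The variables stand for `V`, `L = ΔV`,
`M = |∇V|²`, `N = |∇φ|²`, `D = ∇V · ∇φ`, `φ = |u|² + ε`, `S = |∇u|²`, `I = Re(ū Δu)`,
`r = |u|` and `d = |Δu|`. The last bracket on the right is `∇V · ∇(φ^{p/2})`; its coefficient is
chosen so that its contribution in `N` is exactly absorbed by the one of `Δ(φ^{p/2})`. -/
lemma pointwise_rellich {p σ V L M N D φ S I r d : ℝ} (hp : 1 ≤ p) (hσ : 1 < σ) (hV : 0 < V)
    (hN : 0 ≤ N) (hM : 0 ≤ M) (hVL : V * L + (σ - 1) * M ≤ 0) (hD : D ^ 2 ≤ M * N)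
    (hφ : 0 < φ) (hrφ : r ^ 2 ≤ φ) (hNS : N ≤ 4 * φ * S) (hd : 0 ≤ d)
    (hI : |I| ≤ r * d) :
    -(p * (V * φ ^ ((p - 1) / 2) * d)) -
        (p - 1) * (σ - 1) / p * (-L * φ ^ (p / 2)) ≤
      V * (p / 2 * φ ^ (p / 2 - 1) * (2 * I + 2 * S) +
        p / 2 * (p / 2 - 1) * φ ^ (p / 2 - 2) * N) -
      2 * ((p - 1) * (σ - 1) / p) * (p / 2 * φ ^ (p / 2 - 1) * D) := by
  set P := φ ^ (p / 2 - 2) with hPdef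
  have hP : 0 < P := rpow_pos_of_pos hφ _
  have h1 : φ ^ (p / 2 - 1) = P * φ := by
    rw [hPdef, ← rpow_add_one hφ.ne']; ring_nf
  have h2 : φ ^ (p / 2) = P * φ ^ 2 := by
    rw [hPdef, ← rpow_natCast φ 2, ← rpow_add hφ]; norm_num
  have h3 : φ ^ ((p - 1) / 2) = P * φ * √φ := by
    rw [← h1, sqrt_eq_rpow, ← rpow_add hφ]; ring_nf
  have hp0 : 0 < p := by linarith
  have hrs : r ≤ √φ := le_sqrt_of_sq_le hrφ
  have hId : -(√φ * d) ≤ I := by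
    have := neg_abs_le I
    nlinarith [mul_le_mul_of_nonneg_right hrs hd]
  -- Young's inequality for `∇V · ∇φ`, where `(σ - 1) |∇V|² ≤ V |ΔV|`.
  have hY : (σ - 1) * φ * D ≤ (σ - 1) / p * (-L) * φ ^ 2 + p / 4 * V * N := by
    have hX : 0 ≤ (σ - 1) ^ 2 / p * M * φ ^ 2 + p / 4 * V ^ 2 * N := by positivity
    have hY1 : (σ - 1) * V * φ * D ≤ (σ - 1) ^ 2 / p * M * φ ^ 2 + p / 4 * V ^ 2 * N := by
      refine le_of_sq_le_sq ?_ hX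
      have e1 : 4 * ((σ - 1) ^ 2 / p * M * φ ^ 2) * (p / 4 * V ^ 2 * N) =
          ((σ - 1) * V * φ) ^ 2 * (M * N) := by field_simp
      have e2 : ((σ - 1) * V * φ * D) ^ 2 ≤ ((σ - 1) * V * φ) ^ 2 * (M * N) := by
        rw [mul_pow]; gcongr
      nlinarith [sq_nonneg ((σ - 1) ^ 2 / p * M * φ ^ 2 - p / 4 * V ^ 2 * N)]
    have hY2 : (σ - 1) ^ 2 / p * M * φ ^ 2 ≤ (σ - 1) / p * (V * (-L)) * φ ^ 2 := by
      have : 0 ≤ (σ - 1) / p * φ ^ 2 := by have := sub_pos.2 hσ; positivity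
      have h := mul_le_mul_of_nonneg_left (show (σ - 1) * M ≤ V * (-L) by linarith) this
      calc _ = (σ - 1) / p * φ ^ 2 * ((σ - 1) * M) := by ring
        _ ≤ _ := h
        _ = _ := by ring
    refine le_of_mul_le_mul_left ?_ hV
    nlinarith
  rw [h1, h2, h3]
  have hA : 0 ≤ (p * V * P * φ) * (I + √φ * d) := by
    have : 0 ≤ I + √φ * d := by linarith
    positivity
  have hB : 0 ≤ (p * V * P / 4) * (4 * φ * S - N) := by
    have : 0 ≤ 4 * φ * S - N := by linarith
    positivity
  have hC := mul_le_mul_of_nonneg_left hY (mul_nonneg (sub_nonneg.2 hp) hP.le)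
  have e : 2 * ((p - 1) * (σ - 1) / p) * (p / 2 * (P * φ) * D) =
      (p - 1) * P * ((σ - 1) * φ * D) := by field_simp
  rw [e]
  have e' : (p - 1) * (σ - 1) / p * (-L * (P * φ ^ 2)) =
      (p - 1) * P * ((σ - 1) / p * -L * φ ^ 2) := by ring
  rw [e']
  linarith

end Pointwise

/-! ### The integral inequality -/

section Integral

variable {n : ℕ}

/-- The regularised inequality, for `φ = |u|² + ε`: the pointwise bound integrated over the
support of `u`, with Green's identities applied to `V` and `φ^{p/2} - ε^{p/2}`. -/
lemma regularised_rellich {V : EuclideanSpace ℝ (Fin n) → ℝ} (hV : ContDiff ℝ 2 V)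
    {u : EuclideanSpace ℝ (Fin n) → ℂ} (hu : ContDiff ℝ 2 u) (hcs : HasCompactSupport u)
    {p σ ε : ℝ} (hp : 1 ≤ p) (hσ : 1 < σ) (hε : 0 < ε)
    (hVpos : ∀ x ∈ tsupport u, 0 < V x)
    (hVL : ∀ x ∈ tsupport u, V x * lap V x +
      (σ - 1) * ∑ i, fderiv ℝ V x (EuclideanSpace.single i 1) ^ 2 ≤ 0) :
    (1 + 2 * ((p - 1) * (σ - 1) / p)) *
        ∫ x in tsupport u, -lap V x * ((‖u x‖ ^ 2 + ε) ^ (p / 2) - ε ^ (p / 2)) ≤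
      p * (∫ x in tsupport u, V x * (‖u x‖ ^ 2 + ε) ^ ((p - 1) / 2) * ‖lap u x‖) +
      (p - 1) * (σ - 1) / p *
        ∫ x in tsupport u, -lap V x * (‖u x‖ ^ 2 + ε) ^ (p / 2) := by
  set φ : EuclideanSpace ℝ (Fin n) → ℝ := fun x => ‖u x‖ ^ 2 + ε with hφdef
  have hφpos : ∀ x, 0 < φ x := fun x => by positivity
  have hφ : ContDiff ℝ 2 φ := (hu.norm_sq ℝ).add contDiff_const
  set G : EuclideanSpace ℝ (Fin n) → ℝ := fun x => φ x ^ (p / 2) - ε ^ (p / 2) with hGdef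
  have hG0 : ContDiff ℝ 2 fun x => φ x ^ (p / 2) :=
    hφ.rpow_const_of_ne fun x => (hφpos x).ne'
  have hG : ContDiff ℝ 2 G := hG0.sub contDiff_const
  have hGz : ∀ x, u x = 0 → G x = 0 := fun x hx => by simp [hGdef, hφdef, hx]
  have hGsupp : tsupport G ⊆ tsupport u :=
    closure_mono fun x hx hux => hx (hGz x hux)
  have hGc : HasCompactSupport G := hcs.mono' (subset_tsupport G |>.trans hGsupp)
  set K := tsupport u
  have hK : IsCompact K := hcs
  set a := (p - 1) * (σ - 1) / p with ha
  have hfG : ∀ x v, fderiv ℝ G x v = p / 2 * φ x ^ (p / 2 - 1) * fderiv ℝ φ x v := fun x v => by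
    rw [hGdef, fderiv_sub_const]
    exact fderiv_rpow_apply (hφ.differentiable (by norm_num) x) (hφpos x) _ v
  have hlG : ∀ x, lap G x = lap (fun x => φ x ^ (p / 2)) x := fun x => by
    simp only [lap, hGdef, fderiv_sub_const]
  -- the function `V ΔG - 2a ∇V · ∇G`, whose integral is `(1 + 2a) ∫ G ΔV`
  set Q : EuclideanSpace ℝ (Fin n) → ℝ := fun x => ∑ i,
    fderiv ℝ V x (EuclideanSpace.single i 1) * fderiv ℝ G x (EuclideanSpace.single i 1) with hQ
  have hVlap := continuous_lap hV
  have hQc : Continuous Q := continuous_finsetSum _ fun i _ =>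
    (contDiff_partial hV _).continuous.mul (contDiff_partial hG _).continuous
  have hlGc := continuous_lap hG
  have hoff : ∀ x, x ∉ K → V x * lap G x - 2 * a * Q x = 0 := fun x hx => by
    have h1 : x ∉ tsupport G := fun h => hx (hGsupp h)
    have h2 : fderiv ℝ G x = 0 := by
      rw [(notMem_tsupport_iff_eventuallyEq.1 h1).fderiv_eq]; simp [Pi.zero_def]
    simp [lap_eq_zero_of_notMem_tsupport h1, hQ, h2]
  have hVlc : HasCompactSupport fun x => V x * lap G x :=
    HasCompactSupport.intro hK fun x hx => by
      simp [lap_eq_zero_of_notMem_tsupport fun h => hx (hGsupp h)]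
  have hQcs : HasCompactSupport Q := HasCompactSupport.intro hK fun x hx => by
    have h1 : x ∉ tsupport G := fun h => hx (hGsupp h)
    have h2 : fderiv ℝ G x = 0 := by
      rw [(notMem_tsupport_iff_eventuallyEq.1 h1).fderiv_eq]; simp [Pi.zero_def]
    simp [hQ, h2]
  have hi : Integrable fun x => V x * lap G x :=
    (hV.continuous.mul hlGc).integrable_of_hasCompactSupport hVlc
  have hint : ∫ x in K, (V x * lap G x - 2 * a * Q x) =
      (1 + 2 * a) * ∫ x in K, lap V x * G x := by
    rw [setIntegral_eq_integral_of_forall_compl_eq_zero hoff,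
      setIntegral_eq_integral_of_forall_compl_eq_zero (f := fun x => lap V x * G x)
        fun x hx => by rw [hGz x (image_eq_zero_of_notMem_tsupport hx), mul_zero],
      integral_sub hi ((hQc.integrable_of_hasCompactSupport hQcs).const_mul _),
      integral_const_mul, integral_mul_lap (hV.of_le (by norm_num)) hG hGc,
      integral_lap_mul hV (hG.of_le (by norm_num)) hGc]
    ring
  have hc1 : Continuous fun x => V x * φ x ^ ((p - 1) / 2) * ‖lap u x‖ :=
    (hV.continuous.mul (hφ.continuous.rpow_const fun x => Or.inl (hφpos x).ne')).mul
      (continuous_lap hu).norm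
  have hc2 : Continuous fun x => -lap V x * φ x ^ (p / 2) :=
    hVlap.neg.mul hG0.continuous
  have hmono : ∫ x in K, (-(p * (V x * φ x ^ ((p - 1) / 2) * ‖lap u x‖)) -
      a * (-lap V x * φ x ^ (p / 2))) ≤ ∫ x in K, (V x * lap G x - 2 * a * Q x) := by
    refine setIntegral_mono_on ?_ ?_ hK.measurableSet fun x hx => ?_
    · exact (((hc1.const_mul p).neg.sub (hc2.const_mul a)).continuousOn).integrableOn_compact hK
    · exact (((hV.continuous.mul hlGc).sub (hQc.const_mul _)).continuousOn).integrableOn_compact hK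
    · have hud := hu.differentiable (by norm_num) x
      have e1 : ∀ v, fderiv ℝ φ x v = 2 * inner ℝ (u x) (fderiv ℝ u x v) :=
        fderiv_norm_sq_add_const hud ε
      have e2 : lap φ x = _ := lap_norm_sq_add_const hu x ε
      have e3 : Q x = p / 2 * φ x ^ (p / 2 - 1) *
          ∑ i, fderiv ℝ V x (EuclideanSpace.single i 1) *
            fderiv ℝ φ x (EuclideanSpace.single i 1) := by
        simp only [hQ, hfG, Finset.mul_sum]
        exact Finset.sum_congr rfl fun i _ => by ring
      rw [hlG, lap_rpow hφ.contDiffAt (hφpos x), e2, e3]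
      refine pointwise_rellich hp hσ (hVpos x hx) (Finset.sum_nonneg fun _ _ => sq_nonneg _)
        (Finset.sum_nonneg fun _ _ => sq_nonneg _) (hVL x hx)
        (Finset.sum_mul_sq_le_sq_mul_sq _ _ _) (hφpos x) (r := ‖u x‖) ?_ ?_
        (norm_nonneg _) (abs_real_inner_le_norm _ _)
      · simp only [hφdef]; linarith
      · rw [Finset.mul_sum]
        refine Finset.sum_le_sum fun i _ => ?_
        rw [e1]
        have := abs_real_inner_le_norm (u x) (fderiv ℝ u x (EuclideanSpace.single i 1))
        have h2 := sq_le_sq' (abs_le.1 this).1 (abs_le.1 this).2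
        simp only [hφdef]
        nlinarith [sq_nonneg ‖fderiv ℝ u x (EuclideanSpace.single i 1)‖]
  rw [hint, integral_sub, integral_neg, integral_const_mul, integral_const_mul] at hmono
  · simp only [neg_mul, integral_neg] at hmono ⊢
    linarith
  · exact ((hc1.const_mul p).neg.continuousOn).integrableOn_compact hK
  · exact ((hc2.const_mul a).continuousOn).integrableOn_compact hK

/-- The limit `ε → 0` of `regularised_rellich`. -/
lemma integral_rellich {V : EuclideanSpace ℝ (Fin n) → ℝ} (hV : ContDiff ℝ 2 V)
    {u : EuclideanSpace ℝ (Fin n) → ℂ} (hu : ContDiff ℝ 2 u) (hcs : HasCompactSupport u)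
    {p σ : ℝ} (hp : 1 ≤ p) (hσ : 1 < σ)
    (hVpos : ∀ x ∈ tsupport u, 0 < V x)
    (hVL : ∀ x ∈ tsupport u, V x * lap V x +
      (σ - 1) * ∑ i, fderiv ℝ V x (EuclideanSpace.single i 1) ^ 2 ≤ 0) :
    ((p - 1) * σ + 1) / p * ∫ x in tsupport u, -lap V x * ‖u x‖ ^ p ≤
      p * ∫ x in tsupport u, V x * ‖u x‖ ^ (p - 1) * ‖lap u x‖ := by
  have hK : IsCompact (tsupport u) := hcs
  have hVlap := continuous_lap hV
  have hulap := continuous_lap hu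
  have hVc := hV.continuous
  have huc := hu.continuous
  have hp2 : 0 ≤ p / 2 := by linarith
  have hp3 : 0 ≤ (p - 1) / 2 := by linarith
  have hφ : ∀ s : ℝ, 0 ≤ s → Continuous fun z : ℝ × EuclideanSpace ℝ (Fin n) =>
      (‖u z.2‖ ^ 2 + z.1) ^ s := fun s hs =>
    Continuous.rpow_const (by fun_prop) fun _ => Or.inr hs
  have c1 : Continuous fun ε : ℝ => ∫ x in tsupport u,
      -lap V x * ((‖u x‖ ^ 2 + ε) ^ (p / 2) - ε ^ (p / 2)) := by
    refine continuous_parametric_integral_of_continuous ?_ hK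
    exact (hVlap.comp continuous_snd).neg.mul ((hφ _ hp2).sub
      (continuous_fst.rpow_const fun _ => Or.inr hp2))
  have c2 : Continuous fun ε : ℝ => ∫ x in tsupport u,
      V x * (‖u x‖ ^ 2 + ε) ^ ((p - 1) / 2) * ‖lap u x‖ := by
    refine continuous_parametric_integral_of_continuous ?_ hK
    exact ((hVc.comp continuous_snd).mul (hφ _ hp3)).mul (hulap.comp continuous_snd).norm
  have c3 : Continuous fun ε : ℝ => ∫ x in tsupport u,
      -lap V x * (‖u x‖ ^ 2 + ε) ^ (p / 2) := by
    refine continuous_parametric_integral_of_continuous ?_ hK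
    exact (hVlap.comp continuous_snd).neg.mul (hφ _ hp2)
  have hlim := le_of_tendsto_of_tendsto
    (((c1.const_mul (1 + 2 * ((p - 1) * (σ - 1) / p))).tendsto 0).mono_left
      (nhdsWithin_le_nhds (s := Ioi 0)))
    ((((c2.const_mul p).add (c3.const_mul ((p - 1) * (σ - 1) / p))).tendsto 0).mono_left
      (nhdsWithin_le_nhds (s := Ioi 0)))
    (by
      filter_upwards [self_mem_nhdsWithin] with ε hε
      exact regularised_rellich hV hu hcs hp hσ hε hVpos hVL)
  have hpow : ∀ (x : EuclideanSpace ℝ (Fin n)) (s : ℝ), (‖u x‖ ^ 2) ^ (s / 2) = ‖u x‖ ^ s :=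
    fun x s => by
      rw [← rpow_natCast, ← rpow_mul (norm_nonneg _)]
      congr 1
      push_cast
      ring
  have hz : (0 : ℝ) ^ (p / 2) = 0 := zero_rpow (by linarith)
  simp only [Pi.add_apply, add_zero, hz, sub_zero, hpow] at hlim
  have hp0 : p ≠ 0 := by linarith
  have e : ((p - 1) * σ + 1) / p = 1 + (p - 1) * (σ - 1) / p := by field_simp; ring
  rw [e]
  linarith

end Integral

/-! ### Cutoff and Hölder's inequality -/

section Cutoff

variable {n : ℕ}

/-- A `C²` function on an open set can be replaced, near a compact subset, by a globally `C²`
function. -/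
lemma exists_global_extension {Ω K : Set (EuclideanSpace ℝ (Fin n))} (hΩ : IsOpen Ω)
    (hK : IsCompact K) (hKΩ : K ⊆ Ω) {V : EuclideanSpace ℝ (Fin n) → ℝ}
    (hV : ContDiffOn ℝ 2 V Ω) :
    ∃ W : EuclideanSpace ℝ (Fin n) → ℝ, ContDiff ℝ 2 W ∧ ∀ x ∈ K, W =ᶠ[𝓝 x] V := by
  obtain ⟨T, hT, hKT, hTΩ⟩ := exists_compact_between hK hΩ hKΩ
  obtain ⟨χ, h1, h0, -⟩ := exists_contMDiffMap_one_nhds_of_subset_interior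
    𝓘(ℝ, EuclideanSpace ℝ (Fin n)) (n := 2) hK.isClosed hKT
  have hχ : ContDiff ℝ 2 χ := χ.contMDiff.contDiff
  refine ⟨fun x => χ x * V x, contDiff_iff_contDiffAt.2 fun x => ?_, fun x hx => ?_⟩
  · by_cases hx : x ∈ Ω
    · exact hχ.contDiffAt.mul (hV.contDiffAt (hΩ.mem_nhds hx))
    · have : (fun x => χ x * V x) =ᶠ[𝓝 x] fun _ => 0 := by
        filter_upwards [hT.isClosed.isOpen_compl.mem_nhds fun h => hx (hTΩ h)] with y hy
        rw [h0 y hy, zero_mul]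
      exact contDiffAt_const.congr_of_eventuallyEq this
  · filter_upwards [eventually_nhdsSet_iff_forall.1 h1 x hx] with y hy
    rw [hy, one_mul]

lemma ContinuousOn.memLp_restrict_of_isCompact {K : Set (EuclideanSpace ℝ (Fin n))}
    (hK : IsCompact K) {f : EuclideanSpace ℝ (Fin n) → ℝ} (hf : ContinuousOn f K) (q : ENNReal) :
    MemLp f q (volume.restrict K) := by
  have : IsFiniteMeasure (volume.restrict K) := ⟨by simpa using hK.measure_lt_top⟩
  obtain ⟨C, hC⟩ := hK.exists_bound_of_continuousOn hf
  exact MemLp.of_bound (hf.aestronglyMeasurable hK.measurableSet) C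
    ((ae_restrict_iff' hK.measurableSet).2 (Eventually.of_forall hC))

/-- Hölder's inequality with exponents `p / (p - 1)` and `p`, the weight `w` being split as
`w^{(p-1)/p} · w^{-(p-1)/p}`. -/
lemma weighted_holder {K : Set (EuclideanSpace ℝ (Fin n))} (hK : IsCompact K)
    {V w f g : EuclideanSpace ℝ (Fin n) → ℝ} (hV : ContinuousOn V K) (hw : ContinuousOn w K)
    (hf : ContinuousOn f K) (hg : ContinuousOn g K) (hV0 : ∀ x ∈ K, 0 ≤ V x)
    (hw0 : ∀ x ∈ K, 0 < w x) (hf0 : ∀ x ∈ K, 0 ≤ f x) (hg0 : ∀ x ∈ K, 0 ≤ g x)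
    {p : ℝ} (hp : 1 ≤ p) :
    ∫ x in K, V x * f x ^ (p - 1) * g x ≤ (∫ x in K, w x * f x ^ p) ^ (1 - 1 / p) *
      (∫ x in K, V x ^ p / w x ^ (p - 1) * g x ^ p) ^ (1 / p) := by
  rcases hp.eq_or_lt with rfl | hp1
  · simp
  have hp0 : 0 < p := by linarith
  have hp10 : 0 < p - 1 := by linarith
  have hconj : (p / (p - 1)).HolderConjugate p := (Real.HolderConjugate.conjExponent hp1).symm
  have hmem : ∀ᵐ x ∂(volume.restrict K), x ∈ K := ae_restrict_mem hK.measurableSet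
  have hcw : ∀ s : ℝ, ContinuousOn (fun x => w x ^ s) K := fun s =>
    hw.rpow_const fun x hx => Or.inl (hw0 x hx).ne'
  have key := integral_mul_le_Lp_mul_Lq_of_nonneg (μ := volume.restrict K) hconj
    (f := fun x => w x ^ ((p - 1) / p) * f x ^ (p - 1))
    (g := fun x => w x ^ (-((p - 1) / p)) * V x * g x)
    (by
      filter_upwards [hmem] with x hx
      exact mul_nonneg (rpow_nonneg (hw0 x hx).le _) (rpow_nonneg (hf0 x hx) _))
    (by
      filter_upwards [hmem] with x hx
      exact mul_nonneg (mul_nonneg (rpow_nonneg (hw0 x hx).le _) (hV0 x hx)) (hg0 x hx))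
    (ContinuousOn.memLp_restrict_of_isCompact hK
      ((hcw _).mul (hf.rpow_const fun x _ => Or.inr hp10.le)) _)
    (ContinuousOn.memLp_restrict_of_isCompact hK (((hcw _).mul hV).mul hg) _)
  have e1 : ∫ x in K, V x * f x ^ (p - 1) * g x =
      ∫ x in K, w x ^ ((p - 1) / p) * f x ^ (p - 1) * (w x ^ (-((p - 1) / p)) * V x * g x) := by
    refine setIntegral_congr_fun hK.measurableSet fun x hx => ?_
    have hwx := rpow_pos_of_pos (hw0 x hx) ((p - 1) / p)
    simp only [rpow_neg (hw0 x hx).le]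
    field_simp
  have e2 : ∫ x in K, w x * f x ^ p =
      ∫ x in K, (w x ^ ((p - 1) / p) * f x ^ (p - 1)) ^ (p / (p - 1)) := by
    refine setIntegral_congr_fun hK.measurableSet fun x hx => ?_
    have hwx := (hw0 x hx).le
    have hfx := hf0 x hx
    rw [mul_rpow (rpow_nonneg hwx _) (rpow_nonneg hfx _), ← rpow_mul hwx, ← rpow_mul hfx,
      show (p - 1) / p * (p / (p - 1)) = 1 by field_simp,
      show (p - 1) * (p / (p - 1)) = p by field_simp, rpow_one]
  have e3 : ∫ x in K, V x ^ p / w x ^ (p - 1) * g x ^ p =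
      ∫ x in K, (w x ^ (-((p - 1) / p)) * V x * g x) ^ p := by
    refine setIntegral_congr_fun hK.measurableSet fun x hx => ?_
    have hwx := (hw0 x hx).le
    rw [mul_rpow (mul_nonneg (rpow_nonneg hwx _) (hV0 x hx)) (hg0 x hx),
      mul_rpow (rpow_nonneg hwx _) (hV0 x hx), ← rpow_mul hwx,
      show -((p - 1) / p) * p = -(p - 1) by field_simp, rpow_neg hwx]
    ring
  rw [e1, e2, e3]
  rwa [show 1 - 1 / p = 1 / (p / (p - 1)) by field_simp]

end Cutoff

theorem weighted_Lp_rellich (n : ℕ) (hn : 1 ≤ n) (Ω : Set (EuclideanSpace ℝ (Fin n)))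
    (hΩ : IsOpen Ω) (hne : Ω.Nonempty) (hbd : Bornology.IsBounded Ω)
    (V : EuclideanSpace ℝ (Fin n) → ℝ) (hV : ContDiffOn ℝ 2 V Ω)
    (hVpos : ∀ x ∈ Ω, 0 < V x) (hΔV : ∀ x ∈ Ω, lap V x < 0)
    (σ : ℝ) (hσ : 1 < σ) (hΔVσ : ∀ x ∈ Ω, lap (fun y => V y ^ σ) x ≤ 0)
    (p : ℝ) (hp : 1 ≤ p)
    (u : EuclideanSpace ℝ (Fin n) → ℂ) (hu : ContDiff ℝ (⊤ : ℕ∞) u)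
    (hcs : HasCompactSupport u) (hsupp : tsupport u ⊆ Ω) :
    (∫ x in Ω, |lap V x| * ‖u x‖ ^ p) ^ (1 / p) ≤
      (p ^ (2 : ℕ) / ((p - 1) * σ + 1)) *
        (∫ x in Ω, (V x ^ p / |lap V x| ^ (p - 1)) * ‖lap u x‖ ^ p) ^ (1 / p) := by
  have hp0 : 0 < p := by linarith
  have hu2 : ContDiff ℝ 2 u := hu.of_le (WithTop.coe_le_coe.2 le_top)
  set K := tsupport u
  have hK : IsCompact K := hcs
  obtain ⟨W, hW, hWV⟩ := exists_global_extension hΩ hK hsupp hV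
  have hWe : ∀ x ∈ K, W x = V x := fun x hx => (hWV x hx).self_of_nhds
  have hWlap : ∀ x ∈ K, lap W x = lap V x := fun x hx => lap_congr_nhds (hWV x hx)
  have hWpos : ∀ x ∈ K, 0 < W x := fun x hx => by rw [hWe x hx]; exact hVpos x (hsupp hx)
  have hWneg : ∀ x ∈ K, 0 < -lap W x := fun x hx => by
    rw [hWlap x hx]; linarith [hΔV x (hsupp hx)]
  -- `Δ(V^σ) ≤ 0`, divided by `σ V^{σ-2}`
  have hVL : ∀ x ∈ K, W x * lap W x +
      (σ - 1) * ∑ i, fderiv ℝ W x (EuclideanSpace.single i 1) ^ 2 ≤ 0 := fun x hx => by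
    have h := hΔVσ x (hsupp hx)
    have hσe : (fun y => V y ^ σ) =ᶠ[𝓝 x] fun y => W y ^ σ :=
      (hWV x hx).symm.fun_comp (· ^ σ)
    rw [lap_congr_nhds hσe, lap_rpow hW.contDiffAt (hWpos x hx)] at h
    have hP : 0 < σ * W x ^ (σ - 2) := mul_pos (by linarith) (rpow_pos_of_pos (hWpos x hx) _)
    have e : W x ^ (σ - 1) = W x ^ (σ - 2) * W x := by
      rw [← rpow_add_one (hWpos x hx).ne']; ring_nf
    rw [e] at h
    refine nonpos_of_mul_nonpos_right (le_of_eq_of_le ?_ h) hP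
    ring
  have hA : ∫ x in Ω, |lap V x| * ‖u x‖ ^ p = ∫ x in K, -lap W x * ‖u x‖ ^ p := by
    refine (setIntegral_eq_of_subset_of_forall_sdiff_eq_zero hΩ.measurableSet hsupp ?_).trans ?_
    rotate_left
    · refine setIntegral_congr_fun hK.measurableSet fun x hx => ?_
      rw [← hWlap x hx, abs_of_neg (by linarith [hWneg x hx])]
    · intro x hx
      rw [image_eq_zero_of_notMem_tsupport hx.2, norm_zero, zero_rpow hp0.ne', mul_zero]
  have hB : ∫ x in Ω, (V x ^ p / |lap V x| ^ (p - 1)) * ‖lap u x‖ ^ p =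
      ∫ x in K, W x ^ p / (-lap W x) ^ (p - 1) * ‖lap u x‖ ^ p := by
    refine (setIntegral_eq_of_subset_of_forall_sdiff_eq_zero hΩ.measurableSet hsupp ?_).trans ?_
    rotate_left
    · refine setIntegral_congr_fun hK.measurableSet fun x hx => ?_
      rw [← hWlap x hx, abs_of_neg (by linarith [hWneg x hx]), hWe x hx]
    · intro x hx
      rw [lap_eq_zero_of_notMem_tsupport hx.2, norm_zero, zero_rpow hp0.ne', mul_zero]
  rw [hA, hB]
  have h1 := integral_rellich hW hu2 hcs hp hσ hWpos hVL
  have h2 := weighted_holder hK hW.continuous.continuousOn (continuous_lap hW).neg.continuousOn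
    hu2.continuous.norm.continuousOn (continuous_lap hu2).norm.continuousOn
    (fun x hx => (hWpos x hx).le) hWneg (fun x _ => norm_nonneg _) (fun x _ => norm_nonneg _) hp
  have hA0 : 0 ≤ ∫ x in K, -lap W x * ‖u x‖ ^ p :=
    setIntegral_nonneg hK.measurableSet fun x hx =>
      mul_nonneg (hWneg x hx).le (rpow_nonneg (norm_nonneg _) _)
  have hB0 : 0 ≤ ∫ x in K, W x ^ p / (-lap W x) ^ (p - 1) * ‖lap u x‖ ^ p :=
    setIntegral_nonneg hK.measurableSet fun x hx =>
      mul_nonneg (div_nonneg (rpow_nonneg (hWpos x hx).le _) (rpow_nonneg (hWneg x hx).le _))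
        (rpow_nonneg (norm_nonneg _) _)
  simp only [Pi.neg_apply] at h2
  set A := ∫ x in K, -lap W x * ‖u x‖ ^ p
  set B := ∫ x in K, W x ^ p / (-lap W x) ^ (p - 1) * ‖lap u x‖ ^ p
  have hc : 0 < (p - 1) * σ + 1 := by nlinarith
  rcases hA0.eq_or_lt with hA1 | hA1
  · rw [← hA1, zero_rpow (by positivity)]
    exact mul_nonneg (by positivity) (rpow_nonneg hB0 _)
  -- divide `c A ≤ p A^{1 - 1/p} B^{1/p}` by `A^{1 - 1/p}`
  have h3 : A = A ^ (1 - 1 / p) * A ^ (1 / p) := by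
    rw [← rpow_add hA1]; simp
  have hAp : 0 < A ^ (1 - 1 / p) := rpow_pos_of_pos hA1 _
  have h4 : ((p - 1) * σ + 1) / p * A ≤ p * (A ^ (1 - 1 / p) * B ^ (1 / p)) :=
    h1.trans (mul_le_mul_of_nonneg_left h2 hp0.le)
  rw [div_mul_eq_mul_div, le_div_iff₀ hc]
  refine le_of_mul_le_mul_left ?_ hAp
  rw [div_mul_eq_mul_div, div_le_iff₀ hp0] at h4
  calc A ^ (1 - 1 / p) * (A ^ (1 / p) * ((p - 1) * σ + 1))
      = ((p - 1) * σ + 1) * (A ^ (1 - 1 / p) * A ^ (1 / p)) := by ring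
    _ = ((p - 1) * σ + 1) * A := by rw [← h3]
    _ ≤ p * (A ^ (1 - 1 / p) * B ^ (1 / p)) * p := h4
    _ = _ := by ring
end

section
/- Let n ≥ 1, let Ω ⊆ ℝ^n be a nonempty bounded open set, and let V : Ω → ℝ be a C² function with V(x) > 0 and ΔV(x) < 0 for all x ∈ Ω, and such that Δ(V^σ)(x) ≤ 0 for all x ∈ Ω for some σ > 1. Then for every 1 < p < ∞ and every smooth compactly supported complex-valued function u on Ω, one has (σ - 1) ∫_Ω |ΔV| |u|^p dx ≤ p² ∫_{{x ∈ Ω : u(x) ≠ 0}} V |u|^{p-2} |∇u|² dx, and the right-hand side is finite. -/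
/-!
Expanding `Δ(V^σ) = σ V^(σ-2) ((σ-1)|∇V|² + V ΔV)`, the hypothesis `Δ(V^σ) ≤ 0` becomes the
pointwise bound `(σ-1)|∇V|² ≤ V |ΔV|` (`grad_sq_le_of_lap_rpow_nonpos`).

Since `p > 1`, the function `|u|^p` is `C¹` with compact support in `Ω`, so one integration by parts
gives `∫ |ΔV| |u|^p = ∫ ∇V · ∇|u|^p`. By Young's inequality and the bound on `∇V`, the integrand on
the right is at most `½ |ΔV| |u|^p + ½ (p²/(σ-1)) V |u|^(p-2) |∇u|²` where `u ≠ 0`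
(`pointwise_young`), and it vanishes where `u = 0`. Absorbing the first term into the left-hand side
gives the inequality.

Finiteness of the right-hand side needs an argument only for `p < 2`. With
`f = (|u|² + ε)^(p/2-1)`, integrating `f ∂ᵢ(Re (ū ∂ᵢu))` by parts gives
`(p-1) ∫ f |∂ᵢu|² ≤ ∫ |u|^(p-1) |∂ᵢ²u|` for every `ε > 0` (`regularised_energy_le`), and Fatou's
lemma lets `ε → 0` (`integrableOn_singular_energy`). The weight `V` is bounded on the support of `u`.
-/

open MeasureTheory Real

/-- A product of a function continuous on an open set with a continuous function whose compact
support lies in that set is integrable. -/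
lemma integrable_mul_of_tsupport_subset {n : ℕ} {Ω : Set (EuclideanSpace ℝ (Fin n))}
    (hΩ : IsOpen Ω) {g w : EuclideanSpace ℝ (Fin n) → ℝ} (hg : ContinuousOn g Ω)
    (hw : Continuous w) (hcs : HasCompactSupport w) (hs : tsupport w ⊆ Ω) :
    Integrable (fun x => g x * w x) := by
  have hsub : tsupport (fun x => g x * w x) ⊆ tsupport w :=
    tsupport_mul_subset_right
  refine Continuous.integrable_of_hasCompactSupport ?_ hcs.mul_left
  exact (hg.mul hw.continuousOn).continuous_of_tsupport_subset hΩ (hsub.trans hs)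

/-- Expansion of `lap (V ^ σ)`: superharmonicity of `V ^ σ` is the pointwise bound
`(σ - 1) |∇V|² ≤ V |ΔV|`. -/
lemma grad_sq_le_of_lap_rpow_nonpos {n : ℕ} {Ω : Set (EuclideanSpace ℝ (Fin n))}
    (hΩ : IsOpen Ω) {V : EuclideanSpace ℝ (Fin n) → ℝ} (hV : ContDiffOn ℝ 2 V Ω)
    (hVpos : ∀ x ∈ Ω, 0 < V x) {σ : ℝ} (hσ : 1 < σ) {x : EuclideanSpace ℝ (Fin n)} (hx : x ∈ Ω)
    (h : lap (fun y => V y ^ σ) x ≤ 0) :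
    (σ - 1) * ∑ i, (fderiv ℝ V x (EuclideanSpace.single i 1)) ^ 2 ≤ V x * (-lap V x) := by
  have hVd : ∀ y ∈ Ω, HasFDerivAt V (fderiv ℝ V y) y := fun y hy =>
    ((hV.contDiffAt (hΩ.mem_nhds hy)).differentiableAt (by norm_num)).hasFDerivAt
  have hVx := hVpos x hx
  have key : ∀ i : Fin n,
      fderiv ℝ (fun y => fderiv ℝ (fun y => V y ^ σ) y (EuclideanSpace.single i 1)) x
        (EuclideanSpace.single i 1) =
      σ * V x ^ (σ - 2) * ((σ - 1) * (fderiv ℝ V x (EuclideanSpace.single i 1)) ^ 2 +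
        V x * fderiv ℝ (fun y => fderiv ℝ V y (EuclideanSpace.single i 1)) x
          (EuclideanSpace.single i 1)) := by
    intro i
    set e : EuclideanSpace ℝ (Fin n) := EuclideanSpace.single i 1
    have hev : (fun y => fderiv ℝ (fun y => V y ^ σ) y e) =ᶠ[nhds x]
        fun y => (σ * V y ^ (σ - 1)) * fderiv ℝ V y e := by
      filter_upwards [hΩ.mem_nhds hx] with y hy
      rw [((hVd y hy).rpow_const (p := σ) (Or.inl (hVpos y hy).ne')).fderiv]
      simp
    have hG : HasFDerivAt (fun y => fderiv ℝ V y e) (fderiv ℝ (fun y => fderiv ℝ V y e) x) x := by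
      have h1 : ContDiffAt ℝ 1 (fderiv ℝ V) x :=
        (hV.contDiffAt (hΩ.mem_nhds hx)).fderiv_right (by norm_num)
      exact ((h1.differentiableAt (by norm_num)).clm_apply
        (differentiableAt_const e)).hasFDerivAt
    have h2 := (((hVd x hx).rpow_const (p := σ - 1) (Or.inl hVx.ne')).const_mul σ).mul hG
    rw [hev.fderiv_eq]
    have h3 := h2.fderiv
    simp only [Pi.mul_def] at h3
    rw [h3]
    have e1 : V x ^ (σ - 1) = V x ^ (σ - 2) * V x := by
      rw [← Real.rpow_add_one hVx.ne']; ring_nf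
    have e2 : σ - 1 - 1 = σ - 2 := by ring
    simp only [add_apply, smul_apply, smul_eq_mul, e2, e1]
    ring
  unfold lap at h ⊢
  simp only [key] at h
  rw [← Finset.mul_sum, Finset.sum_add_distrib, ← Finset.mul_sum, ← Finset.mul_sum] at h
  have hpos : 0 < σ * V x ^ (σ - 2) := by positivity
  have := nonpos_of_mul_nonpos_right h hpos
  linarith

/-- Integration by parts for `(‖u‖² + ε)^(p/2-1)` against `Re (ū ∂u)`: a bound, uniform in `ε`, on
the regularised energy of `u` in one direction. -/
lemma regularised_energy_le {n : ℕ} {p : ℝ} (hp1 : 1 < p) (hp2 : p < 2)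
    {u : EuclideanSpace ℝ (Fin n) → ℂ} (hu : ContDiff ℝ (⊤ : ℕ∞) u) (hcs : HasCompactSupport u)
    (e : EuclideanSpace ℝ (Fin n)) {ε : ℝ} (hε : 0 < ε) :
    Integrable (fun x => (‖u x‖ ^ 2 + ε) ^ (p / 2 - 1) * ‖fderiv ℝ u x e‖ ^ 2) ∧
    (p - 1) * ∫ x, (‖u x‖ ^ 2 + ε) ^ (p / 2 - 1) * ‖fderiv ℝ u x e‖ ^ 2 ≤
      ∫ x, ‖u x‖ ^ (p - 1) * ‖fderiv ℝ (fun y => fderiv ℝ u y e) x e‖ := by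
  set D : EuclideanSpace ℝ (Fin n) → ℂ := fun y => fderiv ℝ u y e with hD
  have hDs : ContDiff ℝ (⊤ : ℕ∞) D := (hu.fderiv_right (by simp)).clm_apply contDiff_const
  have hDcs : HasCompactSupport D := hcs.fderiv_apply ℝ e
  set D2 : EuclideanSpace ℝ (Fin n) → ℂ := fun x => fderiv ℝ D x e with hD2
  have hD2c : Continuous D2 :=
    ((hDs.fderiv_right (m := 0) (by simp)).clm_apply contDiff_const).continuous
  have huc := hu.continuous
  have hDc := hDs.continuous
  have hud : ∀ x, HasFDerivAt u (fderiv ℝ u x) x := fun x =>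
    (hu.differentiable (by simp) x).hasFDerivAt
  have hDd : ∀ x, HasFDerivAt D (fderiv ℝ D x) x := fun x =>
    (hDs.differentiable (by simp) x).hasFDerivAt
  have hpos : ∀ x, 0 < ‖u x‖ ^ 2 + ε := fun x => by positivity
  have hcont : ∀ q : ℝ, Continuous fun x => (‖u x‖ ^ 2 + ε) ^ q := fun q =>
    ((huc.norm.pow 2).add continuous_const).rpow_const fun x => Or.inl (hpos x).ne'
  set f : EuclideanSpace ℝ (Fin n) → ℝ := fun x => (‖u x‖ ^ 2 + ε) ^ (p / 2 - 1) with hf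
  set g : EuclideanSpace ℝ (Fin n) → ℝ := fun x => inner ℝ (u x) (D x) with hg
  have hfd : ∀ x, HasFDerivAt f (((p / 2 - 1) * (‖u x‖ ^ 2 + ε) ^ (p / 2 - 1 - 1)) •
      (2 • (innerSL ℝ (u x)).comp (fderiv ℝ u x))) x := fun x =>
    ((hud x).norm_sq.add_const ε).rpow_const (Or.inl (hpos x).ne')
  have hgd := fun x => (hud x).inner ℝ (hDd x)
  have hf' : ∀ x, fderiv ℝ f x e = (p - 2) * (‖u x‖ ^ 2 + ε) ^ (p / 2 - 1 - 1) * g x := by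
    intro x
    rw [(hfd x).fderiv]
    simp [g, D]
    ring
  have hg' : ∀ x, fderiv ℝ g x e = inner ℝ (u x) (D2 x) + ‖D x‖ ^ 2 := by
    intro x
    rw [(hgd x).fderiv]
    simp [D, D2, fderivInnerCLM_apply]
  have hgc : Continuous g := huc.inner hDc
  have hgcs : HasCompactSupport g := by
    refine hcs.mono' (subset_trans ?_ subset_closure)
    intro x hx h0
    apply hx
    simp [g, h0]
  have hint1 : Integrable (fun x => f x * ‖D x‖ ^ 2) := by
    refine Continuous.integrable_of_hasCompactSupport ((hcont _).mul (hDc.norm.pow 2)) ?_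
    refine hDcs.mono' (subset_trans ?_ subset_closure)
    intro x hx h0
    apply hx
    simp [h0]
  have hint2 : Integrable (fun x => f x * inner ℝ (u x) (D2 x)) := by
    refine Continuous.integrable_of_hasCompactSupport ((hcont _).mul (huc.inner hD2c)) ?_
    refine hcs.mono' (subset_trans ?_ subset_closure)
    intro x hx h0
    apply hx
    simp [h0]
  have hint3 : Integrable (fun x => fderiv ℝ f x e * g x) := by
    simp only [hf']
    exact Continuous.integrable_of_hasCompactSupport
      (((continuous_const.mul (hcont _)).mul hgc).mul hgc) hgcs.mul_left
  have hint4 : Integrable (fun x => f x * g x) :=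
    Continuous.integrable_of_hasCompactSupport ((hcont _).mul hgc) hgcs.mul_left
  have hint5 : Integrable (fun x => ‖u x‖ ^ (p - 1) * ‖D2 x‖) := by
    refine Continuous.integrable_of_hasCompactSupport
      ((huc.norm.rpow_const fun x => Or.inr (by linarith)).mul hD2c.norm) ?_
    refine hcs.mono' (subset_trans ?_ subset_closure)
    intro x hx h0
    apply hx
    have : p - 1 ≠ 0 := by linarith
    simp [h0, Real.zero_rpow this]
  have hibp := integral_mul_fderiv_eq_neg_fderiv_mul_of_integrable (v := e) (f := f) (g := g)
    (μ := volume) hint3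
    (by simp only [hg', mul_add]; exact hint2.add hint1) hint4
    (fun x _ => (hfd x).differentiableAt) (fun x _ => (hgd x).differentiableAt)
  refine ⟨hint1, ?_⟩
  have hsplit : ∫ x, f x * fderiv ℝ g x e =
      (∫ x, f x * inner ℝ (u x) (D2 x)) + ∫ x, f x * ‖D x‖ ^ 2 := by
    simp only [hg', mul_add]
    exact integral_add hint2 hint1
  have hb1 : - ∫ x, fderiv ℝ f x e * g x ≤ (2 - p) * ∫ x, f x * ‖D x‖ ^ 2 := by
    rw [← integral_neg, ← integral_const_mul]
    refine integral_mono hint3.neg (hint1.const_mul _) fun x => ?_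
    simp only [hf']
    have h1 : g x ^ 2 ≤ (‖u x‖ ^ 2 + ε) * ‖D x‖ ^ 2 := by
      have h2 : |g x| ≤ ‖u x‖ * ‖D x‖ := abs_real_inner_le_norm _ _
      have h3 : g x ^ 2 ≤ (‖u x‖ * ‖D x‖) ^ 2 := by
        rw [← sq_abs]; gcongr
      nlinarith [mul_nonneg hε.le (sq_nonneg ‖D x‖)]
    have h4 : f x = (‖u x‖ ^ 2 + ε) ^ (p / 2 - 1 - 1) * (‖u x‖ ^ 2 + ε) := by
      rw [← Real.rpow_add_one (hpos x).ne']; simp [f]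
    have h5 : 0 ≤ (2 - p) * (‖u x‖ ^ 2 + ε) ^ (p / 2 - 1 - 1) :=
      mul_nonneg (by linarith) (Real.rpow_nonneg (hpos x).le _)
    have h6 := mul_le_mul_of_nonneg_left h1 h5
    rw [h4]
    linarith
  have hb2 : - ∫ x, f x * inner ℝ (u x) (D2 x) ≤ ∫ x, ‖u x‖ ^ (p - 1) * ‖D2 x‖ := by
    rw [← integral_neg]
    refine integral_mono hint2.neg hint5 fun x => ?_
    simp only
    have h2 : - inner ℝ (u x) (D2 x) ≤ ‖u x‖ * ‖D2 x‖ :=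
      (neg_le_abs _).trans (abs_real_inner_le_norm _ _)
    have h3 : f x * ‖u x‖ ≤ ‖u x‖ ^ (p - 1) := by
      rcases eq_or_ne (u x) 0 with h0 | h0
      · simp [h0, Real.zero_rpow (show p - 1 ≠ 0 by linarith)]
      · have hn : 0 < ‖u x‖ := norm_pos_iff.2 h0
        have h7 : f x ≤ (‖u x‖ ^ 2) ^ (p / 2 - 1) :=
          Real.rpow_le_rpow_of_nonpos (by positivity) (by linarith) (by linarith)
        have h8 : (‖u x‖ ^ 2) ^ (p / 2 - 1) = ‖u x‖ ^ (p - 2) := by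
          rw [← Real.rpow_natCast_mul hn.le]; congr 1; push_cast; ring
        have h9 : ‖u x‖ ^ (p - 1) = ‖u x‖ ^ (p - 2) * ‖u x‖ := by
          rw [← Real.rpow_add_one hn.ne']; ring_nf
        rw [h9, ← h8]
        gcongr
    have hf0 : 0 ≤ f x := Real.rpow_nonneg (hpos x).le _
    calc -(f x * inner ℝ (u x) (D2 x)) = f x * (- inner ℝ (u x) (D2 x)) := by ring
      _ ≤ f x * (‖u x‖ * ‖D2 x‖) := by gcongr
      _ = (f x * ‖u x‖) * ‖D2 x‖ := by ring
      _ ≤ _ := by gcongr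
  linarith

/-- For `1 < p < 2`, letting `ε → 0` in the regularised energy (Fatou) shows that the singular
weight `‖u‖^(p-2)` is integrable against `‖∂u‖²` off the zero set of `u`. -/
lemma integrableOn_singular_energy {n : ℕ} {p : ℝ} (hp1 : 1 < p) (hp2 : p < 2)
    {u : EuclideanSpace ℝ (Fin n) → ℂ} (hu : ContDiff ℝ (⊤ : ℕ∞) u) (hcs : HasCompactSupport u)
    (e : EuclideanSpace ℝ (Fin n)) :
    IntegrableOn (fun x => ‖u x‖ ^ (p - 2) * ‖fderiv ℝ u x e‖ ^ 2) {x | u x ≠ 0} := by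
  set G : ℕ → EuclideanSpace ℝ (Fin n) → ℝ := fun k x =>
    (‖u x‖ ^ 2 + 1 / ((k : ℝ) + 1)) ^ (p / 2 - 1) * ‖fderiv ℝ u x e‖ ^ 2 with hG
  set C := (p - 1)⁻¹ * ∫ x, ‖u x‖ ^ (p - 1) * ‖fderiv ℝ (fun y => fderiv ℝ u y e) x e‖ with hC
  have hk : ∀ k : ℕ, (0 : ℝ) < 1 / ((k : ℝ) + 1) := fun k => by positivity
  have hGi : ∀ k, Integrable (G k) := fun k => (regularised_energy_le hp1 hp2 hu hcs e (hk k)).1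
  have hG0 : ∀ k x, 0 ≤ G k x := fun k x => by
    have := hk k
    simp only [hG]
    positivity
  have hGC : ∀ k, ∫ x, G k x ≤ C := fun k => by
    rw [hC, ← div_eq_inv_mul, le_div_iff₀ (by linarith), mul_comm]
    exact (regularised_energy_le hp1 hp2 hu hcs e (hk k)).2
  have hS : MeasurableSet {x | u x ≠ 0} :=
    (isOpen_ne_fun hu.continuous continuous_const).measurableSet
  have hlim : ∀ᵐ x ∂(volume.restrict {x | u x ≠ 0}), Filter.Tendsto (fun k => G k x) Filter.atTop
      (nhds (‖u x‖ ^ (p - 2) * ‖fderiv ℝ u x e‖ ^ 2)) := by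
    filter_upwards [ae_restrict_mem hS] with x hx
    have hn : 0 < ‖u x‖ := norm_pos_iff.2 hx
    have h8 : ‖u x‖ ^ (p - 2) = (‖u x‖ ^ 2 + 0) ^ (p / 2 - 1) := by
      rw [add_zero, ← Real.rpow_natCast_mul hn.le]; congr 1; push_cast; ring
    rw [h8]
    refine Filter.Tendsto.mul_const _ (Filter.Tendsto.rpow_const ?_ (Or.inl (by positivity)))
    exact tendsto_const_nhds.add tendsto_one_div_add_atTop_nhds_zero_nat
  have hmeas : ∀ k, AEStronglyMeasurable (G k) (volume.restrict {x | u x ≠ 0}) :=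
    fun k => (hGi k).aestronglyMeasurable.restrict
  refine ⟨aestronglyMeasurable_of_tendsto_ae _ hmeas hlim, ?_⟩
  have hbound : ∀ k, ∫⁻ x in {x | u x ≠ 0}, ‖G k x‖ₑ ≤ ENNReal.ofReal C := by
    intro k
    calc ∫⁻ x in {x | u x ≠ 0}, ‖G k x‖ₑ ≤ ∫⁻ x, ‖G k x‖ₑ := setLIntegral_le_lintegral _ _
      _ = ENNReal.ofReal (∫ x, G k x) := by
        rw [ofReal_integral_eq_lintegral_ofReal (hGi k) (Filter.Eventually.of_forall (hG0 k))]
        refine lintegral_congr fun x => ?_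
        rw [Real.enorm_eq_ofReal (hG0 k x)]
      _ ≤ _ := ENNReal.ofReal_le_ofReal (hGC k)
  calc ∫⁻ x in {x | u x ≠ 0}, ‖‖u x‖ ^ (p - 2) * ‖fderiv ℝ u x e‖ ^ 2‖ₑ
      = ∫⁻ x in {x | u x ≠ 0}, Filter.liminf (fun k => ‖G k x‖ₑ) Filter.atTop := by
        refine lintegral_congr_ae ?_
        filter_upwards [hlim] with x hx
        exact hx.enorm.liminf_eq.symm
    _ ≤ Filter.liminf (fun k => ∫⁻ x in {x | u x ≠ 0}, ‖G k x‖ₑ) Filter.atTop :=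
        lintegral_liminf_le' fun k => (hmeas k).enorm
    _ ≤ ENNReal.ofReal C := Filter.liminf_le_of_frequently_le'
        (Filter.Frequently.of_forall hbound)
    _ < ⊤ := ENNReal.ofReal_lt_top

lemma gradNorm_sq {n : ℕ} (u : EuclideanSpace ℝ (Fin n) → ℂ) (x : EuclideanSpace ℝ (Fin n)) :
    gradNorm u x ^ 2 = ∑ i : Fin n, ‖fderiv ℝ u x (EuclideanSpace.single i 1)‖ ^ 2 :=
  Real.sq_sqrt (by positivity)

/-- Finiteness of the weighted energy: for `p ≥ 2` the integrand is continuous with compact support,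
for `p < 2` the singular weight is controlled by `integrableOn_singular_energy`. -/
lemma integrableOn_weighted_energy {n : ℕ} {Ω : Set (EuclideanSpace ℝ (Fin n))}
    (hΩ : IsOpen Ω) {V : EuclideanSpace ℝ (Fin n) → ℝ} (hV : ContinuousOn V Ω)
    {p : ℝ} (hp1 : 1 < p)
    {u : EuclideanSpace ℝ (Fin n) → ℂ} (hu : ContDiff ℝ (⊤ : ℕ∞) u)
    (hcs : HasCompactSupport u) (hsupp : tsupport u ⊆ Ω) :
    IntegrableOn (fun x => V x * ‖u x‖ ^ (p - 2) * gradNorm u x ^ 2) {x | u x ≠ 0} := by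
  have hS : MeasurableSet {x | u x ≠ 0} :=
    (isOpen_ne_fun hu.continuous continuous_const).measurableSet
  have hSt : {x | u x ≠ 0} ⊆ tsupport u := subset_tsupport u
  have hDc : ∀ e, Continuous fun x => fderiv ℝ u x e := fun e =>
    (hu.continuous_fderiv (by simp)).clm_apply continuous_const
  simp only [gradNorm_sq, Finset.mul_sum]
  refine integrable_finsetSum _ fun i _ => ?_
  set e : EuclideanSpace ℝ (Fin n) := EuclideanSpace.single i 1
  simp only [mul_assoc]
  rcases lt_or_ge p 2 with hp2 | hp2
  · obtain ⟨C, hC⟩ := hcs.isCompact.exists_bound_of_continuousOn (hV.mono hsupp)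
    refine (integrableOn_singular_energy hp1 hp2 hu hcs e).bdd_mul (c := C)
      ((hV.mono (hSt.trans hsupp)).aestronglyMeasurable hS) ?_
    filter_upwards [ae_restrict_mem hS] with x hx using hC x (hSt hx)
  · have hsub : tsupport (fun x => ‖u x‖ ^ (p - 2) * ‖fderiv ℝ u x e‖ ^ 2) ⊆ tsupport u := by
      refine (closure_mono ?_).trans (tsupport_fderiv_apply_subset ℝ e)
      intro x hx h0
      apply hx
      simp [h0]
    refine (integrable_mul_of_tsupport_subset hΩ hV ?_ ?_ (hsub.trans hsupp)).integrableOn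
    · exact (hu.continuous.norm.rpow_const fun x => Or.inr (by linarith)).mul ((hDc e).norm.pow 2)
    · exact hcs.of_isClosed_subset (isClosed_tsupport _) hsub

/-- The pointwise bound `∇V · ∇|u|^p ≤ ½ |ΔV| |u|^p + ½ (p²/(σ-1)) V |u|^(p-2) |∇u|²` where `u ≠ 0`,
with `s = σ - 1`, `L = |ΔV|`, `v = V`, `a = ∇V`, `z = u` and `b = ∇u` at the given point. -/
lemma pointwise_young {n : ℕ} {p s L v : ℝ} (hs : 0 < s)
    (hv : 0 < v) (a : Fin n → ℝ) (ha : s * ∑ i, a i ^ 2 ≤ v * L) (z : ℂ) (hz : z ≠ 0)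
    (b : Fin n → ℂ) :
    ∑ i, (p * ‖z‖ ^ (p - 2) * inner ℝ z (b i)) * a i ≤
      1 / 2 * (L * ‖z‖ ^ p) +
        1 / 2 * (p ^ 2 / s * (v * ‖z‖ ^ (p - 2) * ∑ i, ‖b i‖ ^ 2)) := by
  have ht : 0 < ‖z‖ := norm_pos_iff.2 hz
  have e1 : ‖z‖ ^ p = ‖z‖ ^ (p - 2) * ‖z‖ ^ 2 := by
    rw [← Real.rpow_add_natCast ht.ne']; norm_num
  have hT : 0 < ‖z‖ ^ (p - 2) := Real.rpow_pos_of_pos ht _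
  -- termwise Young with weights chosen so that the `a`-part sums to at most `L ‖z‖²`
  have hterm : ∀ i, p * inner ℝ z (b i) * a i ≤
      1 / 2 * (s / v * a i ^ 2 * ‖z‖ ^ 2) + 1 / 2 * (p ^ 2 / s * (v * ‖b i‖ ^ 2)) := by
    intro i
    have h1 : |inner ℝ z (b i)| ≤ ‖z‖ * ‖b i‖ := abs_real_inner_le_norm _ _
    have h2 : p * inner ℝ z (b i) * a i ≤ (|a i| * ‖z‖) * (|p| * ‖b i‖) := by
      calc p * inner ℝ z (b i) * a i ≤ |p * inner ℝ z (b i) * a i| := le_abs_self _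
        _ = |p| * |inner ℝ z (b i)| * |a i| := by rw [abs_mul, abs_mul]
        _ ≤ |p| * (‖z‖ * ‖b i‖) * |a i| := by gcongr
        _ = _ := by ring
    have h3 : ∀ X Y : ℝ, X * Y ≤ 1 / 2 * (s / v * X ^ 2) + 1 / 2 * (v / s * Y ^ 2) := by
      intro X Y
      have : 1 / 2 * (s / v * X ^ 2) + 1 / 2 * (v / s * Y ^ 2) - X * Y =
          1 / 2 * (s / v) * (X - v / s * Y) ^ 2 := by
        field_simp
        ring
      have h4 : 0 ≤ 1 / 2 * (s / v) * (X - v / s * Y) ^ 2 := by positivity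
      linarith
    refine (h2.trans (h3 _ _)).trans_eq ?_
    rw [mul_pow, mul_pow, sq_abs, sq_abs]
    ring
  have hsum : ∑ i, p * inner ℝ z (b i) * a i ≤
      1 / 2 * (L * ‖z‖ ^ 2) + 1 / 2 * (p ^ 2 / s * (v * ∑ i, ‖b i‖ ^ 2)) := by
    refine (Finset.sum_le_sum fun i _ => hterm i).trans ?_
    rw [Finset.sum_add_distrib]
    simp only [← Finset.mul_sum, ← Finset.sum_mul]
    have h5 : s / v * ∑ i, a i ^ 2 ≤ L := by
      rw [div_mul_eq_mul_div, div_le_iff₀ hv]; linarith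
    gcongr
  calc ∑ i, (p * ‖z‖ ^ (p - 2) * inner ℝ z (b i)) * a i
      = ‖z‖ ^ (p - 2) * ∑ i, p * inner ℝ z (b i) * a i := by
        rw [Finset.mul_sum]
        exact Finset.sum_congr rfl fun i _ => by ring
    _ ≤ _ := mul_le_mul_of_nonneg_left hsum hT.le
    _ = _ := by rw [e1]; ring

theorem rellich_lemma_two (n : ℕ) (hn : 1 ≤ n) (Ω : Set (EuclideanSpace ℝ (Fin n)))
    (hΩ : IsOpen Ω) (hne : Ω.Nonempty) (hbd : Bornology.IsBounded Ω)
    (V : EuclideanSpace ℝ (Fin n) → ℝ) (hV : ContDiffOn ℝ 2 V Ω)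
    (hVpos : ∀ x ∈ Ω, 0 < V x) (hΔV : ∀ x ∈ Ω, lap V x < 0)
    (σ : ℝ) (hσ : 1 < σ) (hΔVσ : ∀ x ∈ Ω, lap (fun y => V y ^ σ) x ≤ 0)
    (p : ℝ) (hp1 : 1 < p)
    (u : EuclideanSpace ℝ (Fin n) → ℂ) (hu : ContDiff ℝ (⊤ : ℕ∞) u)
    (hcs : HasCompactSupport u) (hsupp : tsupport u ⊆ Ω) :
    (σ - 1) * ∫ x in Ω, |lap V x| * ‖u x‖ ^ p ≤
        p ^ (2 : ℕ) * ∫ x in Ω ∩ {x | u x ≠ 0}, V x * ‖u x‖ ^ (p - 2) * gradNorm u x ^ 2 ∧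
      IntegrableOn (fun x => V x * ‖u x‖ ^ (p - 2) * gradNorm u x ^ 2)
        (Ω ∩ {x | u x ≠ 0}) := by
  have hS : MeasurableSet {x | u x ≠ 0} :=
    (isOpen_ne_fun hu.continuous continuous_const).measurableSet
  have hSΩ : {x | u x ≠ 0} ⊆ Ω := (subset_tsupport u).trans hsupp
  have hinter : Ω ∩ {x | u x ≠ 0} = {x | u x ≠ 0} := Set.inter_eq_right.2 hSΩ
  rw [hinter]
  have hRint := integrableOn_weighted_energy hΩ hV.continuousOn hp1 hu hcs hsupp
  refine ⟨?_, hRint⟩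
  set w : EuclideanSpace ℝ (Fin n) → ℝ := fun x => ‖u x‖ ^ p with hw
  have hw0 : ∀ x, u x = 0 → w x = 0 := fun x h => by
    simp [hw, h, Real.zero_rpow (show p ≠ 0 by linarith)]
  have hudiff : Differentiable ℝ u := hu.differentiable (by simp)
  have hwC : ContDiff ℝ 1 w := (hu.of_le (by exact_mod_cast le_top)).norm_rpow hp1
  have hwsub : tsupport w ⊆ tsupport u := closure_mono fun x hx h0 => hx (hw0 x h0)
  have hwcs : HasCompactSupport w := hcs.of_isClosed_subset (isClosed_tsupport _) hwsub
  have hwΩ := hwsub.trans hsupp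
  have hw' : ∀ x e, fderiv ℝ w x e = p * ‖u x‖ ^ (p - 2) * inner ℝ (u x) (fderiv ℝ u x e) := by
    intro x e
    rw [hw, hudiff.fderiv_norm_rpow hp1]
    simp
  set G : Fin n → EuclideanSpace ℝ (Fin n) → ℝ :=
    fun i y => fderiv ℝ V y (EuclideanSpace.single i 1) with hG
  have hGC : ∀ i, ContDiffOn ℝ 1 (G i) Ω := fun i =>
    (hV.fderiv_of_isOpen hΩ (by norm_num)).clm_apply contDiffOn_const
  have hG'c : ∀ i, ContinuousOn
      (fun x => fderiv ℝ (G i) x (EuclideanSpace.single i 1)) Ω := fun i =>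
    ((hGC i).continuousOn_fderiv_of_isOpen hΩ le_rfl).clm_apply continuousOn_const
  -- integration by parts in each coordinate direction
  have hint1 : ∀ i, Integrable
      (fun x => w x * fderiv ℝ (G i) x (EuclideanSpace.single i 1)) := fun i => by
    simpa only [mul_comm] using
      integrable_mul_of_tsupport_subset hΩ (hG'c i) hwC.continuous hwcs hwΩ
  have hint2 : ∀ i, Integrable
      (fun x => fderiv ℝ w x (EuclideanSpace.single i 1) * G i x) := fun i => by
    simpa only [mul_comm] using
      integrable_mul_of_tsupport_subset hΩ (hGC i).continuousOn
        ((hwC.continuous_fderiv (by simp)).clm_apply continuous_const)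
        (hwcs.fderiv_apply ℝ (EuclideanSpace.single i 1))
        ((tsupport_fderiv_apply_subset ℝ _).trans hwΩ)
  have hint3 : ∀ i, Integrable (fun x => w x * G i x) := fun i => by
    simpa only [mul_comm] using
      integrable_mul_of_tsupport_subset hΩ (hGC i).continuousOn hwC.continuous hwcs hwΩ
  have hibp : ∀ i, ∫ x, w x * fderiv ℝ (G i) x (EuclideanSpace.single i 1) =
      - ∫ x, fderiv ℝ w x (EuclideanSpace.single i 1) * G i x := fun i =>
    integral_mul_fderiv_eq_neg_fderiv_mul_of_integrable (hint2 i) (hint1 i) (hint3 i)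
      (fun x _ => hwC.differentiable (by simp) x)
      (fun x hx => ((hGC i).contDiffAt (hΩ.mem_nhds (hwΩ hx))).differentiableAt (by simp))
  have hlap : ∀ x, -lap V x * w x =
      - ∑ i, w x * fderiv ℝ (G i) x (EuclideanSpace.single i 1) := fun x => by
    simp only [lap, hG, ← Finset.mul_sum]
    ring
  have hAint : Integrable (fun x => -lap V x * w x) := by
    simp only [hlap]
    exact (integrable_finsetSum _ fun i _ => hint1 i).neg
  have hA : ∫ x, -lap V x * w x =
      ∫ x, ∑ i, fderiv ℝ w x (EuclideanSpace.single i 1) * G i x := by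
    simp only [hlap]
    rw [integral_neg, integral_finsetSum _ fun i _ => hint1 i,
      integral_finsetSum _ fun i _ => hint2 i, ← Finset.sum_neg_distrib]
    exact Finset.sum_congr rfl fun i _ => by rw [hibp i, neg_neg]
  set R : EuclideanSpace ℝ (Fin n) → ℝ :=
    fun x => V x * ‖u x‖ ^ (p - 2) * gradNorm u x ^ 2 with hR
  have hRi : Integrable ({x | u x ≠ 0}.indicator R) := (integrable_indicator_iff hS).2 hRint
  have hs : 0 < σ - 1 := by linarith
  have hpt : ∀ x, ∑ i, fderiv ℝ w x (EuclideanSpace.single i 1) * G i x ≤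
      1 / 2 * (-lap V x * w x) +
        1 / 2 * (p ^ 2 / (σ - 1) * {x | u x ≠ 0}.indicator R x) := by
    intro x
    by_cases hx : u x = 0
    · rw [Set.indicator_of_notMem (by simpa using hx), hw0 x hx]
      simp [hw', hx]
    · have hxΩ : x ∈ Ω := hSΩ hx
      rw [Set.indicator_of_mem (by simpa using hx)]
      simp only [hw', hR, gradNorm_sq]
      exact pointwise_young hs (hVpos x hxΩ) _
        (grad_sq_le_of_lap_rpow_nonpos hΩ hV hVpos hσ hxΩ (hΔVσ x hxΩ)) (u x) hx _
  have hle : ∫ x, -lap V x * w x ≤ 1 / 2 * (∫ x, -lap V x * w x) +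
      1 / 2 * (p ^ 2 / (σ - 1) * ∫ x in {x | u x ≠ 0}, R x) := by
    conv_lhs => rw [hA]
    rw [← integral_indicator hS, ← integral_const_mul, ← integral_const_mul,
      ← integral_const_mul, ← integral_add (hAint.const_mul _) ((hRi.const_mul _).const_mul _)]
    exact integral_mono (integrable_finsetSum _ fun i _ => hint2 i)
      ((hAint.const_mul _).add ((hRi.const_mul _).const_mul _)) hpt
  have hLHS : ∫ x in Ω, |lap V x| * ‖u x‖ ^ p = ∫ x, -lap V x * w x := by
    rw [← integral_indicator hΩ.measurableSet]
    refine integral_congr_ae (Filter.Eventually.of_forall fun x => ?_)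
    by_cases hx : x ∈ Ω
    · simp only [Set.indicator_of_mem hx, abs_of_neg (hΔV x hx), hw]
    · have h0 : u x = 0 := by
        by_contra h
        exact hx (hSΩ h)
      simp [Set.indicator_of_notMem hx, hw0 x h0]
  rw [hLHS]
  have hfin : ∫ x, -lap V x * w x ≤ p ^ 2 / (σ - 1) * ∫ x in {x | u x ≠ 0}, R x := by linarith
  rw [div_mul_eq_mul_div, le_div_iff₀ hs] at hfin
  linarith
end

section
/- Let n ≥ 3, let 1 ≤ p < ∞, and let α ∈ ℝ satisfy 2 < α < n. Then for every smooth compactly supported complex-valued function u on ℝ^n whose support does not contain the origin, one has ∫_{ℝ^n} |u|^p / |x|^α dx ≤ C^p · ∫_{ℝ^n} |Δu|^p / |x|^{α-2p} dx, where C = p² / ((n-α)((p-1)n + α - 2p)). -/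
/-!
The proof is a single application of the divergence theorem followed by a pointwise inequality.
For `η > 0` let `w = (|u|² + η)^(1/2)` and consider the compactly supported `C¹` field
`F = |x|^(2-α) ∇(w^p) + k (w^p - η^(p/2)) |x|^(-α) x`, with `m = (n-α)/p` and
`k = α - 2 + 2(p-1)m`. Its divergence has integral zero. With `g = w ∇w = Re(ū ∇u)`,
expanding `div F` gives, besides `p |x|^(2-α) w^(p-2) Re(ū Δu)` and zeroth-order terms in `w`,
terms in `∇u`. Since `|g|² ≤ w² |∇u|²` (Kato), these are at least
`p(p-1) w^(p-4) |x|^(-α) (|x|²|g|² + 2m w² x·g)`, which by completing the square (this is where a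
Hardy inequality is hidden) is at least `-p(p-1) m² w^p |x|^(-α)`. The choice of `k` makes
`k(n-α) - p(p-1)m² = p/C`, so that
`C div F ≥ |x|^(-α) (p w^p - p C w^(p-1) |x|²|Δu| - C k (n-α) η^(p/2))`
(`div_rellichField_ge` is this bound after the next step).
Young's inequality in its tangent-line form, `young_tangent`, bounds the first two terms below by
`w^p - C^p (|x|²|Δu|)^p ≥ |u|^p - C^p |x|^(2p) |Δu|^p`. Integrating over the support of `u` and
letting `η → 0` gives the theorem, with no separate use of Hölder's inequality.
-/

open MeasureTheory Real

open scoped RealInnerProductSpace ContDiff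

/-! ### The divergence theorem for compactly supported fields -/

lemma integral_fderiv_apply_eq_zero {n : ℕ} (f : EuclideanSpace ℝ (Fin n) → ℝ)
    (hf : ContDiff ℝ 1 f) (hc : HasCompactSupport f) (v : EuclideanSpace ℝ (Fin n)) :
    Integrable (fun x => fderiv ℝ f x v) ∧ ∫ x, fderiv ℝ f x v = 0 := by
  have hint : Integrable (fun x => fderiv ℝ f x v) :=
    ((hf.continuous_fderiv (by norm_num)).clm_apply continuous_const).integrable_of_hasCompactSupport
      (hc.fderiv_apply ℝ v)
  refine ⟨hint, ?_⟩
  have h := integral_mul_fderiv_eq_neg_fderiv_mul_of_integrable (μ := volume)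
    (f := fun _ : EuclideanSpace ℝ (Fin n) => (1 : ℝ)) (g := f) (v := v)
    (by simp) (by simpa using hint)
    (by simpa using hf.continuous.integrable_of_hasCompactSupport hc)
    (fun x _ => by fun_prop) (fun x _ => (hf.differentiable (by norm_num)) x)
  simpa using h

/-! ### The vector field and its divergence -/

lemma contDiff_fderiv_apply {n : ℕ} {u : EuclideanSpace ℝ (Fin n) → ℂ}
    (hu : ContDiff ℝ (⊤ : ℕ∞) u) (v : EuclideanSpace ℝ (Fin n)) :
    ContDiff ℝ 1 (fun x => fderiv ℝ u x v) :=
  ((contDiff_infty.1 hu 2).fderiv_right (m := 1) (by norm_num)).clm_apply contDiff_const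

/-- The `i`-th component of the vector field
`|x|^(2-α) ∇(w^p) + k (w^p - η^(p/2)) |x|^(-α) x`, where `w = (|u|² + η)^(1/2)` is a smooth
regularisation of `|u|`. -/
noncomputable def rellichField {n : ℕ} (p α k η : ℝ) (u : EuclideanSpace ℝ (Fin n) → ℂ)
    (i : Fin n) (x : EuclideanSpace ℝ (Fin n)) : ℝ :=
  p * (‖x‖ ^ 2) ^ (1 - α / 2) * (‖u x‖ ^ 2 + η) ^ (p / 2 - 1) *
      ⟪u x, fderiv ℝ u x (EuclideanSpace.single i 1)⟫
    + k * ((‖u x‖ ^ 2 + η) ^ (p / 2) - η ^ (p / 2)) * (x i * (‖x‖ ^ 2) ^ (-(α / 2)))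

lemma rellichField_eq_zero {n : ℕ} (p α k η : ℝ) (u : EuclideanSpace ℝ (Fin n) → ℂ)
    (i : Fin n) {x : EuclideanSpace ℝ (Fin n)} (hx : u x = 0) :
    rellichField p α k η u i x = 0 := by
  simp [rellichField, hx]

lemma contDiff_rellichField {n : ℕ} (p α k η : ℝ) (hη : 0 < η)
    (u : EuclideanSpace ℝ (Fin n) → ℂ) (hu : ContDiff ℝ (⊤ : ℕ∞) u)
    (hsupp : (0 : EuclideanSpace ℝ (Fin n)) ∉ tsupport u) (i : Fin n) :
    ContDiff ℝ 1 (rellichField p α k η u i) := by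
  rw [contDiff_iff_contDiffAt]
  intro x
  by_cases hx : x ∈ tsupport u
  · have hx0 : x ≠ 0 := fun h => hsupp (h ▸ hx)
    have hS : ‖x‖ ^ 2 ≠ 0 := by positivity
    have hQ : ‖u x‖ ^ 2 + η ≠ 0 := by positivity
    have hu1 : ContDiffAt ℝ 1 u x := (hu.of_le (by exact_mod_cast le_top)).contDiffAt
    have hdu : ContDiffAt ℝ 1
        (fun x => fderiv ℝ u x (EuclideanSpace.single i 1)) x :=
      (contDiff_fderiv_apply hu _).contDiffAt
    have hSd : ContDiffAt ℝ 1 (fun x : EuclideanSpace ℝ (Fin n) => ‖x‖ ^ 2) x :=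
      contDiffAt_id.norm_sq ℝ
    have hQd : ContDiffAt ℝ 1 (fun x => ‖u x‖ ^ 2 + η) x :=
      (hu1.norm_sq ℝ).add contDiffAt_const
    have hxi : ContDiffAt ℝ 1 (fun x : EuclideanSpace ℝ (Fin n) => x i) x := by fun_prop
    exact (((contDiffAt_const.mul (hSd.rpow_const_of_ne hS)).mul
      (hQd.rpow_const_of_ne hQ)).mul (hu1.inner ℝ hdu)).add
      ((contDiffAt_const.mul ((hQd.rpow_const_of_ne hQ).sub contDiffAt_const)).mul
        (hxi.mul (hSd.rpow_const_of_ne hS)))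
  · have h0 : rellichField p α k η u i =ᶠ[nhds x] fun _ => 0 := by
      filter_upwards [notMem_tsupport_iff_eventuallyEq.1 hx] with y hy
      exact rellichField_eq_zero p α k η u i hy
    exact contDiffAt_const.congr_of_eventuallyEq h0

lemma hasCompactSupport_rellichField {n : ℕ} (p α k η : ℝ)
    (u : EuclideanSpace ℝ (Fin n) → ℂ) (hcs : HasCompactSupport u) (i : Fin n) :
    HasCompactSupport (rellichField p α k η u i) :=
  hcs.mono fun _ hx h => hx (rellichField_eq_zero p α k η u i h)

/-- All powers of `|x|` and of `|u|² + η` are written through `T = |x|^(-α)` and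
`P = (|u|² + η)^(p/2-2)`, so that what remains is polynomial apart from one division by `S`. -/
lemma fderiv_rellichField {n : ℕ} (p α k η : ℝ) (hη : 0 < η)
    (u : EuclideanSpace ℝ (Fin n) → ℂ) (hu : ContDiff ℝ (⊤ : ℕ∞) u)
    (hsupp : (0 : EuclideanSpace ℝ (Fin n)) ∉ tsupport u) (i : Fin n)
    (x : EuclideanSpace ℝ (Fin n)) (hx : x ≠ 0) (e : EuclideanSpace ℝ (Fin n))
    (he : e = EuclideanSpace.single i 1) (T P S Q : ℝ) (hS : S = ‖x‖ ^ 2) (hQ : Q = ‖u x‖ ^ 2 + η)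
    (hT : T = S ^ (-(α / 2))) (hP : P = Q ^ (p / 2 - 2)) :
    fderiv ℝ (rellichField p α k η u i) x e =
      T * (p * S * P * Q * (‖fderiv ℝ u x e‖ ^ 2 + ⟪u x, fderiv ℝ (fun y => fderiv ℝ u y e) x e⟫)
        + p * (p - 2) * S * P * ⟪u x, fderiv ℝ u x e⟫ ^ 2
        + (2 - α + k) * p * P * Q * (x i * ⟪u x, fderiv ℝ u x e⟫)
        + k * (P * Q ^ 2 - η ^ (p / 2)))
        - k * α * (P * Q ^ 2 - η ^ (p / 2)) * T / S * x i ^ 2 := by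
  have hS0 : 0 < S := by rw [hS]; positivity
  have hQ0 : 0 < Q := by rw [hQ]; positivity
  have hF := (((contDiff_rellichField p α k η hη u hu hsupp i).differentiable
    (by norm_num)) x).hasFDerivAt.hasLineDerivAt e
  have hu' : HasDerivAt (fun t : ℝ => u (x + t • e)) (fderiv ℝ u x e) 0 :=
    ((hu.differentiable (by simp)) x).hasFDerivAt.hasLineDerivAt e
  have hdu : Differentiable ℝ (fun y => fderiv ℝ u y e) :=
    (contDiff_fderiv_apply hu e).differentiable (by norm_num)
  have hu'' : HasDerivAt (fun t : ℝ => fderiv ℝ u (x + t • e) e)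
      (fderiv ℝ (fun y => fderiv ℝ u y e) x e) 0 :=
    (hdu x).hasFDerivAt.hasLineDerivAt e
  have hl : HasDerivAt (fun t : ℝ => x + t • e) e 0 := by
    simpa using ((hasDerivAt_id (0 : ℝ)).smul_const e).const_add x
  have hy : HasDerivAt (fun t : ℝ => (x + t • e) i) 1 0 := by
    have : (fun t : ℝ => (x + t • e) i) = fun t => x i + t := by
      funext t; simp [he]
    rw [this]; exact (hasDerivAt_id (0 : ℝ)).const_add (x i)
  have hs := hl.norm_sq
  have hq := hu'.norm_sq.add_const η
  have hxe : ⟪x, e⟫ = x i := by simp [he, EuclideanSpace.inner_single_right]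
  simp only [zero_smul, add_zero, hxe] at hs hq
  have hg := hu'.inner ℝ hu''
  have hs1 := hs.rpow_const (p := 1 - α / 2) (Or.inl (by simpa using hx))
  have hs2 := hs.rpow_const (p := -(α / 2)) (Or.inl (by simpa using hx))
  have hq1 := hq.rpow_const (p := p / 2 - 1) (Or.inl (by simpa [← hQ] using hQ0.ne'))
  have hq2 := hq.rpow_const (p := p / 2) (Or.inl (by simpa [← hQ] using hQ0.ne'))
  have hD := (((hs1.const_mul p).mul hq1).mul hg).add
    (((hq2.sub_const (η ^ (p / 2))).const_mul k).mul (hy.mul hs2))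
  have hF' : HasDerivAt (fun t : ℝ => rellichField p α k η u i (x + t • e)) _ 0 := hF
  simp only [rellichField, ← he] at hF'
  have key := hF'.unique hD
  simp only [zero_smul, add_zero, ← hS, ← hQ, Pi.mul_apply] at key
  have e1 : S ^ (1 - α / 2) = T * S := by
    rw [hT, show 1 - α / 2 = -(α / 2) + 1 by ring, Real.rpow_add_one hS0.ne']
  have e2 : S ^ (1 - α / 2 - 1) = T := by rw [hT]; congr 1; ring
  have e3 : S ^ (-(α / 2) - 1) = T / S := by rw [hT, Real.rpow_sub_one hS0.ne']
  have e4 : Q ^ (p / 2 - 1 - 1) = P := by rw [hP]; congr 1; ring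
  have e5 : Q ^ (p / 2 - 1) = P * Q := by
    rw [hP, show p / 2 - 1 = p / 2 - 2 + 1 by ring, Real.rpow_add_one hQ0.ne']
  have e6 : Q ^ (p / 2) = P * Q ^ 2 := by
    rw [show p / 2 = p / 2 - 1 + 1 by ring, Real.rpow_add_one hQ0.ne', e5]; ring
  rw [e1, e2, e3, e4, e5, e6, ← hT, real_inner_self_eq_norm_sq] at key
  rw [key]
  field_simp
  ring

lemma div_rellichField {n : ℕ} (p α k η : ℝ) (hη : 0 < η)
    (u : EuclideanSpace ℝ (Fin n) → ℂ) (hu : ContDiff ℝ (⊤ : ℕ∞) u)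
    (hsupp : (0 : EuclideanSpace ℝ (Fin n)) ∉ tsupport u)
    (x : EuclideanSpace ℝ (Fin n)) (hx : x ≠ 0)
    (T P S Q : ℝ) (hS : S = ‖x‖ ^ 2) (hQ : Q = ‖u x‖ ^ 2 + η)
    (hT : T = S ^ (-(α / 2))) (hP : P = Q ^ (p / 2 - 2)) :
    ∑ i, fderiv ℝ (rellichField p α k η u i) x (EuclideanSpace.single i 1) =
      T * (p * S * P * Q * ((∑ i, ‖fderiv ℝ u x (EuclideanSpace.single i 1)‖ ^ 2) + ⟪u x, lap u x⟫)
        + p * (p - 2) * S * P * ∑ i, ⟪u x, fderiv ℝ u x (EuclideanSpace.single i 1)⟫ ^ 2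
        + (2 - α + k) * p * P * Q * ∑ i, x i * ⟪u x, fderiv ℝ u x (EuclideanSpace.single i 1)⟫
        + k * (n - α) * (P * Q ^ 2 - η ^ (p / 2))) := by
  have hS0 : 0 < S := by rw [hS]; positivity
  rw [Finset.sum_congr rfl fun i _ =>
    fderiv_rellichField p α k η hη u hu hsupp i x hx _ rfl T P S Q hS hQ hT hP]
  have hS' : ∑ i, x i ^ 2 = S := by rw [hS, EuclideanSpace.real_norm_sq_eq]
  simp only [Finset.sum_sub_distrib, ← Finset.mul_sum, Finset.sum_add_distrib, hS', lap, inner_sum,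
    Finset.sum_const, Finset.card_univ, Fintype.card_fin, nsmul_eq_mul]
  field_simp
  ring

/-! ### The pointwise lower bound -/

/-- The tangent-line form of Young's inequality: Bernoulli's inequality for `C * b / a`. -/
lemma young_tangent {p a b C : ℝ} (hp : 1 ≤ p) (ha : 0 < a) (hb : 0 ≤ b) (hC : 0 < C) :
    a ^ p - C ^ p * b ^ p ≤ p * a ^ p - p * C * (a ^ (p - 1) * b) := by
  have h := one_add_mul_self_le_rpow_one_add (s := C * b / a - 1)
    (by have : 0 ≤ C * b / a := by positivity
        linarith) hp
  rw [add_sub_cancel, Real.div_rpow (by positivity) ha.le, Real.mul_rpow hC.le hb,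
    le_div_iff₀ (by positivity)] at h
  have e : a ^ p = a ^ (p - 1) * a := by rw [← Real.rpow_add_one ha.ne']; congr 1; ring
  have e2 : (1 + p * (C * b / a - 1)) * a ^ p = a ^ p - p * a ^ p + p * C * (a ^ (p - 1) * b) := by
    rw [e]; field_simp; ring
  linarith

/-- Pointwise lower bound for the divergence at the constant `k` for which the terms containing
`∇u` complete a square. The last term on the left is the error due to the regularisation. -/
lemma div_rellichField_ge {n : ℕ} (p α k η C : ℝ) (hη : 0 < η) (hp : 1 ≤ p) (hα1 : 2 < α)
    (hα2 : α < n)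
    (hk : k = α - 2 + 2 * (p - 1) * ((n - α) / p))
    (hC : C = p ^ (2 : ℕ) / (((n : ℝ) - α) * ((p - 1) * n + α - 2 * p)))
    (u : EuclideanSpace ℝ (Fin n) → ℂ) (hu : ContDiff ℝ (⊤ : ℕ∞) u)
    (hsupp : (0 : EuclideanSpace ℝ (Fin n)) ∉ tsupport u)
    (x : EuclideanSpace ℝ (Fin n)) (hx : x ≠ 0) :
    ‖u x‖ ^ p / ‖x‖ ^ α - C ^ p * (‖lap u x‖ ^ p / ‖x‖ ^ (α - 2 * p))
        - C * k * (n - α) * η ^ (p / 2) * (1 / ‖x‖ ^ α) ≤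
      C * ∑ i, fderiv ℝ (rellichField p α k η u i) x (EuclideanSpace.single i 1) := by
  obtain ⟨S, hS⟩ : ∃ S, S = ‖x‖ ^ 2 := ⟨_, rfl⟩
  obtain ⟨Q, hQ⟩ : ∃ Q, Q = ‖u x‖ ^ 2 + η := ⟨_, rfl⟩
  obtain ⟨T, hT⟩ : ∃ T, T = S ^ (-(α / 2)) := ⟨_, rfl⟩
  obtain ⟨P, hP⟩ : ∃ P, P = Q ^ (p / 2 - 2) := ⟨_, rfl⟩
  have hp0 : 0 < p := by linarith
  have hden : 0 < (p - 1) * n + α - 2 * p := by nlinarith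
  have hnα : 0 < (n : ℝ) - α := by linarith
  have hC0 : 0 < C := by rw [hC]; positivity
  have hx0 : 0 < ‖x‖ := norm_pos_iff.2 hx
  have hS0 : 0 < S := by rw [hS]; positivity
  have hQ0 : 0 < Q := by rw [hQ]; positivity
  have hT0 : 0 < T := by rw [hT]; positivity
  have hP0 : 0 < P := by rw [hP]; positivity
  rw [div_rellichField p α k η hη u hu hsupp x hx T P S Q hS hQ hT hP]
  obtain ⟨N, hN⟩ : ∃ N, N = ∑ i, ‖fderiv ℝ u x (EuclideanSpace.single i 1)‖ ^ 2 := ⟨_, rfl⟩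
  obtain ⟨G, hG⟩ : ∃ G, G = ∑ i, ⟪u x, fderiv ℝ u x (EuclideanSpace.single i 1)⟫ ^ 2 := ⟨_, rfl⟩
  obtain ⟨X, hX⟩ : ∃ X, X = ∑ i, x i * ⟪u x, fderiv ℝ u x (EuclideanSpace.single i 1)⟫ := ⟨_, rfl⟩
  rw [← hN, ← hG, ← hX]
  have hGN : G ≤ Q * N := by
    rw [hG, hN, Finset.mul_sum]
    refine Finset.sum_le_sum fun i _ => ?_
    have h1 := abs_real_inner_le_norm (u x) (fderiv ℝ u x (EuclideanSpace.single i 1))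
    have h2 := pow_le_pow_left₀ (abs_nonneg _) h1 2
    rw [sq_abs, mul_pow] at h2
    refine h2.trans ?_
    gcongr
    rw [hQ]; linarith
  have hXG : X ^ 2 ≤ S * G := by
    rw [hX, hG, hS, EuclideanSpace.real_norm_sq_eq]
    exact Finset.sum_mul_sq_le_sq_mul_sq _ _ _
  obtain ⟨w, hw⟩ : ∃ w, w = Q ^ (1 / 2 : ℝ) := ⟨_, rfl⟩
  have hw0 : 0 < w := by rw [hw]; positivity
  have huw : ‖u x‖ ≤ w := by
    rw [hw, ← Real.sqrt_eq_rpow]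
    exact Real.le_sqrt_of_sq_le (by rw [hQ]; linarith)
  have hw2 : w ^ 2 = Q := by rw [hw, ← Real.sqrt_eq_rpow, Real.sq_sqrt hQ0.le]
  have hPQ2 : P * Q ^ 2 = w ^ p := by
    rw [hP, hw, ← Real.rpow_mul hQ0.le, ← Real.rpow_natCast, ← Real.rpow_add hQ0]
    congr 1; push_cast; ring
  have hwp : w ^ p = w ^ (p - 1) * w := by rw [← Real.rpow_add_one hw0.ne']; congr 1; ring
  have hPQ : P * Q * w = w ^ (p - 1) := by
    have : P * Q * w * w = w ^ (p - 1) * w := by rw [← hwp, ← hPQ2, ← hw2]; ring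
    exact mul_right_cancel₀ hw0.ne' this
  have hL : -(w ^ (p - 1) * ‖lap u x‖) ≤ P * Q * ⟪u x, lap u x⟫ := by
    have h1 := neg_le_of_abs_le (abs_real_inner_le_norm (u x) (lap u x))
    have h2 : ‖u x‖ * ‖lap u x‖ ≤ w * ‖lap u x‖ := by gcongr
    calc -(w ^ (p - 1) * ‖lap u x‖) = P * Q * (-(w * ‖lap u x‖)) := by rw [← hPQ]; ring
      _ ≤ _ := by gcongr; linarith
  have hY := young_tangent (b := S * ‖lap u x‖) hp hw0 (by positivity) hC0
  have hTx : T = 1 / ‖x‖ ^ α := by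
    rw [hT, hS, ← Real.rpow_natCast, ← Real.rpow_mul hx0.le, one_div, ← Real.rpow_neg hx0.le]
    congr 1; push_cast; ring
  have hb : T * (S * ‖lap u x‖) ^ p = ‖lap u x‖ ^ p / ‖x‖ ^ (α - 2 * p) := by
    rw [Real.mul_rpow hS0.le (norm_nonneg _), hTx, hS, ← Real.rpow_natCast, ← Real.rpow_mul hx0.le,
      Real.rpow_sub hx0]
    push_cast
    field_simp
  obtain ⟨m, hm⟩ : ∃ m, m = ((n : ℝ) - α) / p := ⟨_, rfl⟩
  rw [← hm] at hk
  have hnm : (n : ℝ) - α = p * m := by rw [hm]; field_simp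
  -- the constant: `p / C = k (n - α) - p (p - 1) m²`
  have hCk : C * (k * (n - α) - p * (p - 1) * m ^ 2) = p := by
    have hn : (n : ℝ) = α + p * m := by linarith
    have hA : k * (n - α) - p * (p - 1) * m ^ 2 = m * ((p - 1) * n + α - 2 * p) := by
      rw [hk, hn]; ring
    have hm0 : 0 < m := by rw [hm]; positivity
    rw [hA, hC, hnm]
    have hden' := hden.ne'
    generalize (p - 1) * (n : ℝ) + α - 2 * p = d at hden'
    field_simp
  have hsq : 0 ≤ S * G + 2 * m * Q * X + m ^ 2 * Q ^ 2 := by nlinarith [sq_nonneg (m * Q + X)]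
  have hmain : k * (n - α) * (w ^ p - η ^ (p / 2)) - p * (p - 1) * m ^ 2 * w ^ p
      - p * (w ^ (p - 1) * (S * ‖lap u x‖)) ≤
      p * S * P * Q * (N + ⟪u x, lap u x⟫) + p * (p - 2) * S * P * G
        + (2 - α + k) * p * P * Q * X + k * (n - α) * (P * Q ^ 2 - η ^ (p / 2)) := by
    have h1 : 0 ≤ p * S * P * (Q * N - G) := by
      have := sub_nonneg.2 hGN
      positivity
    have h2 : 0 ≤ p * (p - 1) * P * (S * G + 2 * m * Q * X + m ^ 2 * Q ^ 2) := by
      have := sub_nonneg.2 hp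
      positivity
    have h3 := mul_le_mul_of_nonneg_left hL (mul_pos hp0 hS0).le
    have hk' : 2 - α + k = 2 * (p - 1) * m := by rw [hk]; ring
    rw [hk', ← hPQ2]
    linarith
  have hup : ‖u x‖ ^ p ≤ w ^ p := by gcongr
  calc ‖u x‖ ^ p / ‖x‖ ^ α - C ^ p * (‖lap u x‖ ^ p / ‖x‖ ^ (α - 2 * p))
        - C * k * (n - α) * η ^ (p / 2) * (1 / ‖x‖ ^ α)
      = T * (‖u x‖ ^ p - C ^ p * (S * ‖lap u x‖) ^ p - C * k * (n - α) * η ^ (p / 2)) := by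
        rw [← hb, ← hTx, div_eq_mul_one_div, ← hTx]; ring
    _ ≤ T * (C * (k * (n - α) * (w ^ p - η ^ (p / 2)) - p * (p - 1) * m ^ 2 * w ^ p
      - p * (w ^ (p - 1) * (S * ‖lap u x‖)))) := by
        gcongr
        have : C * (k * (n - α) - p * (p - 1) * m ^ 2) * w ^ p = p * w ^ p := by rw [hCk]
        linarith
    _ ≤ _ := by
        rw [mul_left_comm]
        gcongr

/-! ### Integration and the limit `η → 0` -/

lemma continuous_lap_s12 {n : ℕ} (u : EuclideanSpace ℝ (Fin n) → ℂ) (hu : ContDiff ℝ (⊤ : ℕ∞) u) :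
    Continuous (lap u) := by
  refine continuous_finsetSum _ fun i _ => ?_
  exact ((contDiff_fderiv_apply hu _).continuous_fderiv (by norm_num)).clm_apply continuous_const

lemma lap_eq_zero {n : ℕ} (u : EuclideanSpace ℝ (Fin n) → ℂ) {x : EuclideanSpace ℝ (Fin n)}
    (hx : x ∉ tsupport u) : lap u x = 0 := by
  refine Finset.sum_eq_zero fun i _ => ?_
  have h1 : x ∉ tsupport (fun y => fderiv ℝ u y (EuclideanSpace.single i 1)) := fun h =>
    hx (tsupport_fderiv_apply_subset ℝ _ h)
  rw [fderiv_of_notMem_tsupport (𝕜 := ℝ) h1]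
  rfl

theorem weighted_Lp_rellich_power (n : ℕ) (hn : 3 ≤ n) (p α : ℝ) (hp : 1 ≤ p)
    (hα1 : 2 < α) (hα2 : α < n)
    (u : EuclideanSpace ℝ (Fin n) → ℂ) (hu : ContDiff ℝ (⊤ : ℕ∞) u) (hcs : HasCompactSupport u)
    (hsupp : (0 : EuclideanSpace ℝ (Fin n)) ∉ tsupport u) :
    ∫ x, ‖u x‖ ^ p / ‖x‖ ^ α ≤
      (p ^ (2 : ℕ) / (((n : ℝ) - α) * ((p - 1) * n + α - 2 * p))) ^ p *
        ∫ x, ‖lap u x‖ ^ p / ‖x‖ ^ (α - 2 * p) := by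
  obtain ⟨C, hC⟩ : ∃ C, C = p ^ (2 : ℕ) / (((n : ℝ) - α) * ((p - 1) * n + α - 2 * p)) := ⟨_, rfl⟩
  obtain ⟨k, hk⟩ : ∃ k, k = α - 2 + 2 * (p - 1) * ((n - α) / p) := ⟨_, rfl⟩
  rw [← hC]
  have hp0 : 0 < p := by linarith
  set K := tsupport u with hKdef
  have hK : IsCompact K := hcs
  have hne : ∀ x ∈ K, x ≠ 0 := fun x hx h => hsupp (h ▸ hx)
  have hpow : ∀ r : ℝ, ContinuousOn (fun x : EuclideanSpace ℝ (Fin n) => ‖x‖ ^ r) K := fun r =>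
    continuous_norm.continuousOn.rpow_const fun x hx => Or.inl (norm_ne_zero_iff.2 (hne x hx))
  have hpow0 : ∀ r : ℝ, ∀ x ∈ K, ‖x‖ ^ r ≠ 0 := fun r x hx =>
    (Real.rpow_pos_of_pos (norm_pos_iff.2 (hne x hx)) r).ne'
  have i1 : IntegrableOn (fun x => ‖u x‖ ^ p / ‖x‖ ^ α) K :=
    ContinuousOn.integrableOn_compact hK
      ((hu.continuous.norm.rpow_const fun _ => Or.inr hp0.le).continuousOn.div (hpow _) (hpow0 _))
  have i2 : IntegrableOn (fun x => ‖lap u x‖ ^ p / ‖x‖ ^ (α - 2 * p)) K :=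
    ContinuousOn.integrableOn_compact hK
      (((continuous_lap_s12 u hu).norm.rpow_const fun _ => Or.inr hp0.le).continuousOn.div
        (hpow _) (hpow0 _))
  have i3 : IntegrableOn (fun x : EuclideanSpace ℝ (Fin n) => 1 / ‖x‖ ^ α) K :=
    ContinuousOn.integrableOn_compact hK (continuousOn_const.div (hpow _) (hpow0 _))
  have z1 : ∫ x in K, ‖u x‖ ^ p / ‖x‖ ^ α = ∫ x, ‖u x‖ ^ p / ‖x‖ ^ α :=
    setIntegral_eq_integral_of_forall_compl_eq_zero fun x hx => by
      simp [image_eq_zero_of_notMem_tsupport hx, Real.zero_rpow hp0.ne']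
  have z2 : ∫ x in K, ‖lap u x‖ ^ p / ‖x‖ ^ (α - 2 * p) =
      ∫ x, ‖lap u x‖ ^ p / ‖x‖ ^ (α - 2 * p) :=
    setIntegral_eq_integral_of_forall_compl_eq_zero fun x hx => by
      simp [lap_eq_zero u hx, Real.zero_rpow hp0.ne']
  rw [← z1, ← z2]
  have hη : ∀ η : ℝ, 0 < η → (∫ x in K, ‖u x‖ ^ p / ‖x‖ ^ α) -
      C ^ p * (∫ x in K, ‖lap u x‖ ^ p / ‖x‖ ^ (α - 2 * p)) ≤
      C * k * (n - α) * η ^ (p / 2) * ∫ x in K, 1 / ‖x‖ ^ α := by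
    intro η hη
    have hF := fun i : Fin n => integral_fderiv_apply_eq_zero (rellichField p α k η u i)
      (contDiff_rellichField p α k η hη u hu hsupp i)
      (hasCompactSupport_rellichField p α k η u hcs i) (EuclideanSpace.single i 1)
    have hDint : Integrable fun x =>
        ∑ i, fderiv ℝ (rellichField p α k η u i) x (EuclideanSpace.single i 1) :=
      integrable_finsetSum _ fun i _ => (hF i).1
    have hD0 : ∫ x in K,
        ∑ i, fderiv ℝ (rellichField p α k η u i) x (EuclideanSpace.single i 1) = 0 := by
      rw [setIntegral_eq_integral_of_forall_compl_eq_zero, integral_finsetSum _ fun i _ => (hF i).1]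
      · exact Finset.sum_eq_zero fun i _ => (hF i).2
      · intro x hx
        refine Finset.sum_eq_zero fun i _ => ?_
        have h1 : x ∉ tsupport (rellichField p α k η u i) := fun h =>
          hx (closure_mono (Function.support_subset_iff'.2 fun y hy =>
            rellichField_eq_zero p α k η u i (Function.notMem_support.1 hy)) h)
        rw [fderiv_of_notMem_tsupport (𝕜 := ℝ) h1]
        rfl
    have hmono := setIntegral_mono_on
      ((i1.sub (i2.const_mul (C ^ p))).sub (i3.const_mul (C * k * (n - α) * η ^ (p / 2))))
      (hDint.integrableOn.const_mul C) hK.measurableSet fun x hx =>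
        div_rellichField_ge p α k η C hη hp hα1 hα2 hk hC u hu hsupp x (hne x hx)
    rw [integral_const_mul, hD0, mul_zero] at hmono
    rw [integral_sub' (i1.sub (i2.const_mul (C ^ p))) (i3.const_mul _),
      integral_sub' i1 (i2.const_mul (C ^ p)), integral_const_mul, integral_const_mul] at hmono
    linarith
  have hlim : Filter.Tendsto
      (fun η : ℝ => C * k * (n - α) * η ^ (p / 2) * ∫ x in K, 1 / ‖x‖ ^ α)
      (nhdsWithin 0 (Set.Ioi 0)) (nhds 0) := by
    have h0 : Filter.Tendsto (fun η : ℝ => η ^ (p / 2)) (nhdsWithin 0 (Set.Ioi 0)) (nhds 0) := by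
      have := (Real.continuousAt_rpow_const (0 : ℝ) (p / 2) (Or.inr (by positivity))).tendsto
      rw [Real.zero_rpow (by positivity)] at this
      exact this.mono_left nhdsWithin_le_nhds
    simpa using (h0.const_mul (C * k * (n - α))).mul_const (∫ x in K, 1 / ‖x‖ ^ α)
  have := ge_of_tendsto hlim (Filter.eventually_of_mem self_mem_nhdsWithin fun η h => hη η h)
  linarith
end

section
/- Let n ≥ 3, let 1 < p < ∞, and let α ∈ ℝ satisfy 2 - n < α < 0. Then for every smooth compactly supported complex-valued function u on ℝ^n whose support does not contain the origin, one has ((n+α-2)/p)^p · ∫_{ℝ^n} |x|^{α-2} |u|^p dx ≤ ∫_{ℝ^n} |x|^{α+p-2} |∇u|^p dx. -/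
/-!
The inequality comes from the vector field `|x|^(α-2) x`, whose divergence away from the origin
is `(n+α-2) |x|^(α-2)`. Put `g = |x|^(α-2) |u|^p`, a `C¹` function with compact support (`p > 1`,
and `u` vanishes near the origin). Integrating by parts in each coordinate gives
`∫ Dg(x) x dx = -n ∫ g` (`integral_fderiv_apply_self`). By the chain rule and Cauchy–Schwarz,
`-Dg(x) x ≤ (2-α) g + p |x|^(α-2) |u|^(p-1) |x| |∇u|`, and Young's inequality with parameter
`c = (n+α-2)/p` (`weighted_young`) bounds the last term by
`(p-1) c g + c^(1-p) |x|^(α+p-2) |∇u|^p`. After integration the coefficients combine as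
`n - (2-α) - (p-1) c = c`, so that `c ∫ g ≤ c^(1-p) ∫ |x|^(α+p-2) |∇u|^p`; multiplying by
`c^(p-1)` gives the claim.
-/

open MeasureTheory Real

/-- Young's inequality with a parameter `c`; equality holds when `b = c * a`. -/
lemma weighted_young {p a b c : ℝ} (hp : 1 < p) (ha : 0 ≤ a) (hb : 0 ≤ b) (hc : 0 < c) :
    p * a ^ (p - 1) * b ≤ (p - 1) * c * a ^ p + c ^ (1 - p) * b ^ p := by
  have hp0 : 0 < p := by linarith
  have h := Real.geom_mean_le_arith_mean2_weighted (w₁ := (p - 1) / p) (w₂ := 1 / p)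
    (p₁ := c * a ^ p) (p₂ := c ^ (1 - p) * b ^ p) (div_nonneg (by linarith) hp0.le)
    (by positivity) (by positivity) (by positivity) (by field_simp; ring)
  have h1 : (c * a ^ p) ^ ((p - 1) / p) * (c ^ (1 - p) * b ^ p) ^ (1 / p) = a ^ (p - 1) * b := by
    rw [Real.mul_rpow hc.le (by positivity), Real.mul_rpow (by positivity) (by positivity),
      ← Real.rpow_mul ha, ← Real.rpow_mul hb, ← Real.rpow_mul hc.le,
      show p * ((p - 1) / p) = p - 1 by field_simp, show p * (1 / p) = 1 by field_simp,
      Real.rpow_one,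
      show c ^ ((p - 1) / p) * a ^ (p - 1) * (c ^ ((1 - p) * (1 / p)) * b)
        = (c ^ ((p - 1) / p) * c ^ ((1 - p) * (1 / p))) * (a ^ (p - 1) * b) by ring,
      ← Real.rpow_add hc, show (p - 1) / p + (1 - p) * (1 / p) = 0 by ring, Real.rpow_zero,
      one_mul]
  rw [h1] at h
  calc p * a ^ (p - 1) * b = p * (a ^ (p - 1) * b) := by ring
    _ ≤ p * ((p - 1) / p * (c * a ^ p) + 1 / p * (c ^ (1 - p) * b ^ p)) := by gcongr
    _ = _ := by field_simp

lemma sum_smul_single {n : ℕ} (x : EuclideanSpace ℝ (Fin n)) :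
    ∑ i, x i • EuclideanSpace.single i (1 : ℝ) = x := by
  simpa using (EuclideanSpace.basisFun (Fin n) ℝ).sum_repr x

/-- The operator norm of the derivative is at most the Hilbert–Schmidt norm `gradNorm`. -/
lemma norm_fderiv_le_gradNorm {n : ℕ} {E : Type*} [NormedAddCommGroup E] [NormedSpace ℝ E]
    (f : EuclideanSpace ℝ (Fin n) → E) (x : EuclideanSpace ℝ (Fin n)) :
    ‖fderiv ℝ f x‖ ≤ gradNorm f x := by
  refine ContinuousLinearMap.opNorm_le_bound _ (Real.sqrt_nonneg _) fun v => ?_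
  conv_lhs => rw [← sum_smul_single v, map_sum]
  refine (norm_sum_le _ _).trans ?_
  simp only [map_smul, norm_smul]
  rw [mul_comm, EuclideanSpace.norm_eq]
  exact Real.sum_mul_le_sqrt_mul_sqrt _ _ _

/-- Euler's field has divergence `n`: for a `C¹` compactly supported `g`, the integral of the
derivative of `g` along `x ↦ x` is `-n ∫ g`. -/
lemma integral_fderiv_apply_self {n : ℕ} {g : EuclideanSpace ℝ (Fin n) → ℝ}
    (hg : ContDiff ℝ 1 g) (hc : HasCompactSupport g) :
    ∫ x, fderiv ℝ g x x = -(n * ∫ x, g x) := by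
  have hg' : Continuous (fderiv ℝ g) := hg.continuous_fderiv one_ne_zero
  have key (i : Fin n) : Integrable (fun x => x i * fderiv ℝ g x (EuclideanSpace.single i 1)) ∧
      ∫ x, x i * fderiv ℝ g x (EuclideanSpace.single i 1) = -∫ x, g x := by
    have hd (x : EuclideanSpace ℝ (Fin n)) :
        HasFDerivAt (fun y : EuclideanSpace ℝ (Fin n) => y i)
          (EuclideanSpace.proj (𝕜 := ℝ) i) x := (EuclideanSpace.proj (𝕜 := ℝ) i).hasFDerivAt
    have hd1 (x : EuclideanSpace ℝ (Fin n)) :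
        fderiv ℝ (fun y : EuclideanSpace ℝ (Fin n) => y i) x (EuclideanSpace.single i 1) = 1 := by
      rw [(hd x).fderiv]; simp
    have hint : Integrable (fun x => x i * fderiv ℝ g x (EuclideanSpace.single i 1)) := by
      refine Continuous.integrable_of_hasCompactSupport (by fun_prop) ?_
      exact (hc.fderiv_apply (𝕜 := ℝ) _).mul_left
    refine ⟨hint, ?_⟩
    rw [integral_mul_fderiv_eq_neg_fderiv_mul_of_integrable _ hint _
      (fun x _ => (hd x).differentiableAt) (fun x _ => hg.differentiable one_ne_zero x)]
    · simp only [hd1, one_mul]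
    · simp only [hd1, one_mul]
      exact hg.continuous.integrable_of_hasCompactSupport hc
    · have := hg.continuous
      exact Continuous.integrable_of_hasCompactSupport (by fun_prop) hc.mul_left
  have hsum (x : EuclideanSpace ℝ (Fin n)) :
      fderiv ℝ g x x = ∑ i, x i * fderiv ℝ g x (EuclideanSpace.single i 1) := by
    conv_lhs => rw [← sum_smul_single x, map_sum]
    simp [sum_smul_single]
  simp_rw [hsum]
  rw [integral_finsetSum _ fun i _ => (key i).1]
  simp [fun i => (key i).2]

/-- Away from the origin, `|x|^q` is homogeneous of degree `q` (in Euler's infinitesimal form). -/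
lemma exists_hasFDerivAt_norm_rpow {E : Type*} [NormedAddCommGroup E] [InnerProductSpace ℝ E]
    {x : E} (hx : x ≠ 0) (q : ℝ) :
    ∃ L : E →L[ℝ] ℝ, HasFDerivAt (fun y : E => ‖y‖ ^ q) L x ∧ L x = q * ‖x‖ ^ q := by
  have hd := ((contDiffAt_norm ℝ hx).differentiableAt (n := 1) one_ne_zero).hasFDerivAt
  refine ⟨_, hd.rpow_const (p := q) (Or.inl (norm_ne_zero_iff.2 hx)), ?_⟩
  have h : fderiv ℝ (fun y : E => ‖y‖) x x = ‖x‖ := by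
    exact hd.differentiableAt.fderiv_norm_self
  have hx' : 0 < ‖x‖ := norm_pos_iff.2 hx
  rw [smul_apply, h, smul_eq_mul, mul_assoc, ← Real.rpow_add_one hx'.ne']
  simp

theorem local_weighted_Lp_hardy (n : ℕ) (hn : 3 ≤ n) (p α : ℝ) (hp : 1 < p)
    (hα1 : 2 - (n : ℝ) < α) (hα2 : α < 0)
    (u : EuclideanSpace ℝ (Fin n) → ℂ) (hu : ContDiff ℝ (⊤ : ℕ∞) u) (hcs : HasCompactSupport u)
    (hsupp : (0 : EuclideanSpace ℝ (Fin n)) ∉ tsupport u) :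
    (((n : ℝ) + α - 2) / p) ^ p * ∫ x, ‖x‖ ^ (α - 2) * ‖u x‖ ^ p ≤
      ∫ x, ‖x‖ ^ (α + p - 2) * gradNorm u x ^ p := by
  have hp0 : 0 < p := by linarith
  have hc : 0 < ((n : ℝ) + α - 2) / p := div_pos (by linarith) hp0
  set c : ℝ := ((n : ℝ) + α - 2) / p with hcdef
  have hcp : c * p = (n : ℝ) + α - 2 := by rw [hcdef]; field_simp
  set g : EuclideanSpace ℝ (Fin n) → ℝ := fun x => ‖x‖ ^ (α - 2) * ‖u x‖ ^ p with hgdef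
  set r : EuclideanSpace ℝ (Fin n) → ℝ := fun x => ‖x‖ ^ (α + p - 2) * gradNorm u x ^ p with hrdef
  have hu1 : ContDiff ℝ 1 u := hu.of_le (by exact_mod_cast le_top)
  have hud : Differentiable ℝ u := hu1.differentiable one_ne_zero
  have hup : ContDiff ℝ 1 (fun x => ‖u x‖ ^ p) := hu1.norm_rpow hp
  have hne {x : EuclideanSpace ℝ (Fin n)} (hx : x ∈ tsupport u) : x ≠ 0 := by
    rintro rfl; exact hsupp hx
  have hg0 {x : EuclideanSpace ℝ (Fin n)} (hx : x ∉ tsupport u) : g =ᶠ[nhds x] fun _ => 0 := by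
    filter_upwards [notMem_tsupport_iff_eventuallyEq.1 hx] with y hy
    simp [hgdef, hy, hp0.ne']
  have hr0 {x : EuclideanSpace ℝ (Fin n)} (hx : x ∉ tsupport u) : r =ᶠ[nhds x] fun _ => 0 := by
    have : x ∉ tsupport (fderiv ℝ u) := fun h => hx (tsupport_fderiv_subset ℝ h)
    filter_upwards [notMem_tsupport_iff_eventuallyEq.1 this] with y hy
    simp [hrdef, gradNorm, hy, hp0.ne']
  have hgs : HasCompactSupport g := by
    refine HasCompactSupport.intro hcs fun x hx => (hg0 hx).eq_of_nhds
  have hrs : HasCompactSupport r := by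
    refine HasCompactSupport.intro hcs fun x hx => (hr0 hx).eq_of_nhds
  have hgC : ContDiff ℝ 1 g := by
    rw [contDiff_iff_contDiffAt]
    intro x
    by_cases hx : x ∈ tsupport u
    · exact ((contDiffAt_norm ℝ (hne hx)).rpow_const_of_ne
        (norm_ne_zero_iff.2 (hne hx))).mul hup.contDiffAt
    · exact contDiffAt_const.congr_of_eventuallyEq (hg0 hx)
  have hgradC : Continuous (gradNorm u) := by
    have := hu1.continuous_fderiv one_ne_zero
    unfold gradNorm
    fun_prop
  have hrC : Continuous r := by
    rw [continuous_iff_continuousAt]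
    intro x
    by_cases hx : x ∈ tsupport u
    · exact (continuousAt_id.norm.rpow_const (Or.inl (norm_ne_zero_iff.2 (hne hx)))).mul
        (hgradC.continuousAt.rpow_const (Or.inr hp0.le))
    · exact continuousAt_const.congr (hr0 hx).symm
  have hgi : Integrable g := hgC.continuous.integrable_of_hasCompactSupport hgs
  have hri : Integrable r := hrC.integrable_of_hasCompactSupport hrs
  have hDi : Integrable (fun x => fderiv ℝ g x x) := by
    have := hgC.continuous_fderiv one_ne_zero
    refine Continuous.integrable_of_hasCompactSupport (by fun_prop) ?_
    refine HasCompactSupport.intro (hgs.fderiv (𝕜 := ℝ)) fun x hx => ?_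
    simp [image_eq_zero_of_notMem_tsupport hx]
  have hpt (x : EuclideanSpace ℝ (Fin n)) :
      -fderiv ℝ g x x ≤ (2 - α + (p - 1) * c) * g x + c ^ (1 - p) * r x := by
    by_cases hx : x ∈ tsupport u
    · have hx0 : 0 < ‖x‖ := norm_pos_iff.2 (hne hx)
      have hG : 0 ≤ gradNorm u x := Real.sqrt_nonneg _
      obtain ⟨L, hL, hLx⟩ := exists_hasFDerivAt_norm_rpow (hne hx) (α - 2)
      have hD : fderiv ℝ g x x = ‖x‖ ^ (α - 2) * fderiv ℝ (fun y => ‖u y‖ ^ p) x x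
          + (α - 2) * g x := by
        have hgL : HasFDerivAt g _ x := hL.mul (hup.differentiable one_ne_zero x).hasFDerivAt
        rw [hgL.fderiv]
        simp only [add_apply, smul_apply, smul_eq_mul, hLx, hgdef]
        ring
      have hle : -fderiv ℝ (fun y => ‖u y‖ ^ p) x x
          ≤ p * ‖u x‖ ^ (p - 1) * (‖x‖ * gradNorm u x) := by
        calc -fderiv ℝ (fun y => ‖u y‖ ^ p) x x
            ≤ ‖fderiv ℝ (fun y => ‖u y‖ ^ p) x x‖ := neg_le_abs _
          _ ≤ ‖fderiv ℝ (fun y => ‖u y‖ ^ p) x‖ * ‖x‖ := ContinuousLinearMap.le_opNorm _ _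
          _ ≤ (p * ‖u x‖ ^ (p - 1) * gradNorm u x) * ‖x‖ := by
            gcongr
            refine (norm_fderiv_norm_rpow_le hud hp).trans ?_
            gcongr
            exact norm_fderiv_le_gradNorm u x
          _ = _ := by ring
      have hy := hle.trans (weighted_young hp (norm_nonneg (u x))
        (mul_nonneg hx0.le hG) hc)
      have hm := mul_le_mul_of_nonneg_left hy (Real.rpow_nonneg hx0.le (α - 2))
      have hr : r x = ‖x‖ ^ (α - 2) * (‖x‖ * gradNorm u x) ^ p := by
        rw [Real.mul_rpow hx0.le hG, ← mul_assoc, ← Real.rpow_add hx0]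
        simp only [hrdef]
        ring_nf
      have hgx : g x = ‖x‖ ^ (α - 2) * ‖u x‖ ^ p := rfl
      rw [hD, hr, hgx]
      linarith
    · simp [(hg0 hx).fderiv_eq, (hg0 hx).eq_of_nhds, (hr0 hx).eq_of_nhds]
  have hI := integral_mono hDi.neg ((hgi.const_mul _).add (hri.const_mul _)) hpt
  simp only [Pi.neg_apply, Pi.add_apply] at hI
  rw [integral_neg, integral_add (hgi.const_mul _) (hri.const_mul _), integral_const_mul,
    integral_const_mul, integral_fderiv_apply_self hgC hgs] at hI
  have hfin : c * ∫ x, g x ≤ c ^ (1 - p) * ∫ x, r x := by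
    have : (n : ℝ) = c * p + 2 - α := by linarith
    rw [this] at hI
    linarith
  have hmul := mul_le_mul_of_nonneg_left hfin (Real.rpow_nonneg hc.le (p - 1))
  rw [← mul_assoc, ← mul_assoc, ← Real.rpow_add_one hc.ne', ← Real.rpow_add hc] at hmul
  simpa using hmul
end
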